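/- Suppose the lattice operator H is stable and admits a lattice Green's function 𝒢. Let p, α ∈ ℕ₀, c > 0, and let u ∈ 𝓗¹ satisfy |H[u](ℓ)| ≤ c⟨ℓ⟩^{−d−p}(log⟨ℓ⟩)^α for all ℓ ∈ Λ, and assume the moments vanish: 𝓘_i[u] = 0 for i = 0,…,p−1. Then for each j ∈ {1,2} there is a constant C such that |D^j u(ℓ)| ≤ C⟨ℓ⟩^{2−d−p−j}(log⟨ℓ⟩)^{α+1} for all ℓ ∈ Λ. Moreover, for any j ≥ 3 the same bound holds provided additionally |D^m H[u](ℓ)| ≤ c⟨ℓ⟩^{−d−p−m}(log⟨ℓ⟩)^α for all ℓ ∈ Λ and m = 1,…,j−2. -/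

import Mathlib

noncomputable section

open scoped BigOperators
open MeasureTheory Filter Topology

namespace Defect

abbrev Vec (n : ℕ) : Type := Fin n → ℝ

/-- Euclidean norm of a vector in `ℝ^n`. -/
def enorm {n : ℕ} (v : Vec n) : ℝ := Real.sqrt (∑ i, (v i) ^ 2)

/-- `⟨x⟩ := |x| + 2`. -/
def ang {n : ℕ} (v : Vec n) : ℝ := enorm v + 2

def dotV {n : ℕ} (x y : Vec n) : ℝ := ∑ i, x i * y i

/-- Matrix-vector product for a plain `Fin N → Fin N → ℝ` matrix. -/
def mulV {N : ℕ} (M : Fin N → Fin N → ℝ) (v : Vec N) : Vec N := fun i => ∑ j, M i j * v j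

/-- Euclidean (Frobenius) norm of an `N × N` array. -/
def mnorm {N : ℕ} (M : Fin N → Fin N → ℝ) : ℝ := Real.sqrt (∑ i, ∑ j, (M i j) ^ 2)

/-- The lattice point `A z` for `z ∈ ℤ^d`. -/
def latticePt (d : ℕ) (A : Matrix (Fin d) (Fin d) ℝ) (z : Fin d → ℤ) : Vec d :=
  fun i => ∑ j, A i j * (z j : ℝ)

/-- The Bravais lattice `Λ = A ℤ^d`. -/
def Lattice (d : ℕ) (A : Matrix (Fin d) (Fin d) ℝ) : Set (Vec d) :=
  Set.range (latticePt d A)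

/-- First-order finite difference `D_ρ u (ℓ) = u(ℓ+ρ) - u(ℓ)`. -/
def D1 {d : ℕ} {M : Type} [AddCommGroup M] (ρ : Vec d) (u : Vec d → M) (ℓ : Vec d) : M :=
  u (ℓ + ρ) - u ℓ

/-- Iterated finite difference `D_{ρ₁} ⋯ D_{ρ_j} u (ℓ)` (closed form). -/
def Dmulti {d : ℕ} {M : Type} [AddCommGroup M] [Module ℝ M] {j : ℕ}
    (ρs : Fin j → Vec d) (u : Vec d → M) (ℓ : Vec d) : M :=
  ∑ S : Finset (Fin j), ((-1 : ℝ) ^ (j - S.card)) • u (ℓ + ∑ i ∈ S, ρs i)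

/-- `|Du(ℓ)|²`, the squared Euclidean norm of the stencil of first differences. -/
def Dnorm1Sq {d N : ℕ} (R : Finset (Vec d)) (u : Vec d → Vec N) (ℓ : Vec d) : ℝ :=
  ∑ ρ ∈ R, (enorm (D1 ρ u ℓ)) ^ 2

/-- `|D^j u(ℓ)|`, the Euclidean norm of the array `(D_{ρ⃗} u(ℓ))_{ρ⃗ ∈ R^j}`. -/
def DnormJ {d N : ℕ} (R : Finset (Vec d)) (j : ℕ) (u : Vec d → Vec N) (ℓ : Vec d) : ℝ :=
  Real.sqrt (∑ ρs : Fin j → {x // x ∈ R},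
    (enorm (Dmulti (fun i => (ρs i : Vec d)) u ℓ)) ^ 2)

/-- The linearized lattice operator
`H[u](ℓ) = ∑_{σ,ρ∈R} (C_{σρ} D_ρ u(ℓ-σ) - C_{σρ} D_ρ u(ℓ))`. -/
def Hop (d N : ℕ) (R : Finset (Vec d)) (C : Vec d → Vec d → Fin N → Fin N → ℝ)
    (u : Vec d → Vec N) (ℓ : Vec d) : Vec N :=
  ∑ σ ∈ R, ∑ ρ ∈ R, (mulV (C σ ρ) (D1 ρ u (ℓ - σ)) - mulV (C σ ρ) (D1 ρ u ℓ))

/-- `u ∈ 𝓗¹`. -/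
def InH1 {d N : ℕ} (A : Matrix (Fin d) (Fin d) ℝ) (R : Finset (Vec d))
    (u : Vec d → Vec N) : Prop :=
  Summable fun z : Fin d → ℤ => Dnorm1Sq R u (latticePt d A z)

/-- `u ∈ 𝓗ᶜ` : the stencil `Du` has bounded support on the lattice. -/
def InHc {d N : ℕ} (A : Matrix (Fin d) (Fin d) ℝ) (R : Finset (Vec d))
    (u : Vec d → Vec N) : Prop :=
  ∃ rad : ℝ, ∀ z : Fin d → ℤ, rad ≤ enorm (latticePt d A z) →
    ∀ ρ ∈ R, D1 ρ u (latticePt d A z) = 0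

/-- Stability of the lattice operator `H`. -/
def IsStable (d N : ℕ) (A : Matrix (Fin d) (Fin d) ℝ) (R : Finset (Vec d))
    (C : Vec d → Vec d → Fin N → Fin N → ℝ) : Prop :=
  ∃ c₀ : ℝ, 0 < c₀ ∧ ∀ u : Vec d → Vec N, InHc A R u →
    c₀ * (∑' z : Fin d → ℤ, Dnorm1Sq R u (latticePt d A z)) ≤
      ∑' z : Fin d → ℤ, ∑ σ ∈ R, ∑ ρ ∈ R,
        dotV (D1 σ u (latticePt d A z)) (mulV (C σ ρ) (D1 ρ u (latticePt d A z)))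

/-- `k`-th column of a matrix-valued function. -/
def col {d N : ℕ} (G : Vec d → Fin N → Fin N → ℝ) (k : Fin N) : Vec d → Vec N :=
  fun x i => G x i k

/-- `|D^j 𝒢(ℓ)|` for matrix-valued `𝒢`. -/
def DnormJmat {d N : ℕ} (R : Finset (Vec d)) (j : ℕ)
    (G : Vec d → Fin N → Fin N → ℝ) (ℓ : Vec d) : ℝ :=
  Real.sqrt (∑ k : Fin N, (DnormJ R j (col G k) ℓ) ^ 2)

/-- `𝒢` is a lattice Green's function for `H`. -/
def IsLatticeGreen (d N : ℕ) (A : Matrix (Fin d) (Fin d) ℝ) (R : Finset (Vec d))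
    (C : Vec d → Vec d → Fin N → Fin N → ℝ) (G : Vec d → Fin N → Fin N → ℝ) : Prop :=
  (∀ (k : Fin N) (z : Fin d → ℤ),
      Hop d N R C (col G k) (latticePt d A z) =
        if latticePt d A z = 0 then Pi.single k 1 else 0) ∧
  (∀ j : ℕ, 1 ≤ j → ∃ cj : ℝ, ∀ z : Fin d → ℤ,
      DnormJmat R j G (latticePt d A z) ≤
        cj * ang (latticePt d A z) ^ ((2 : ℝ) - d - j))

/-- A symmetric array `b ∈ (ℝ^{Fin d})^{⊙ i}`. -/
def SymArr {d i : ℕ} (b : (Fin i → Fin d) → ℝ) : Prop :=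
  ∀ (π : Equiv.Perm (Fin i)) (σv : Fin i → Fin d), b (σv ∘ π) = b σv

/-- `b : D_𝒮^i f`, a multipole term built from the basis `s`. -/
def multipole (d N : ℕ) (s : Fin d → Vec d) (i : ℕ) (b : (Fin i → Fin d) → ℝ)
    (f : Vec d → Vec N) : Vec d → Vec N :=
  fun ℓ => ∑ σv : Fin i → Fin d, b σv • Dmulti (fun m => s (σv m)) f ℓ

/-- Iterated partial derivative `∂_{j₁} ⋯ ∂_{j_i} f (x)`. -/
def pderivMulti {d : ℕ} (i : ℕ) (js : Fin i → Fin d) (f : Vec d → ℝ) (x : Vec d) : ℝ :=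
  iteratedFDeriv ℝ i f x (fun m => Pi.single (js m) (1 : ℝ))

/-- `a : ∇^i f (x)` for a tensor `a ∈ (ℝ^d)^{⊗ i}`. -/
def aContract {d : ℕ} (i : ℕ) (a : (Fin i → Fin d) → ℝ) (f : Vec d → ℝ) (x : Vec d) : ℝ :=
  ∑ js : Fin i → Fin d, a js * pderivMulti i js f x

/-- Elementary tensor `σ⃗^⊗` as an array. -/
def tensorPow {d k : ℕ} (σs : Fin k → Vec d) : (Fin k → Fin d) → ℝ :=
  fun js => ∏ m, σs m (js m)

/-- Symmetric tensor product `σ⃗^⊙`. -/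
def symTensor {d k : ℕ} (σs : Fin k → Vec d) : (Fin k → Fin d) → ℝ :=
  fun js => ((k.factorial : ℝ))⁻¹ * ∑ π : Equiv.Perm (Fin k), tensorPow (σs ∘ π) js

/-- A symmetric tensor (array invariant under index permutations). -/
def SymTensor {d k : ℕ} (T : (Fin k → Fin d) → ℝ) : Prop :=
  ∀ (π : Equiv.Perm (Fin k)) (js : Fin k → Fin d), T (js ∘ π) = T js

/-- `∂V/∂g_ρ (gs)` as a vector in `ℝ^N`. -/
def gradV {d N : ℕ} (R : Finset (Vec d)) (V : ({x // x ∈ R} → Vec N) → ℝ)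
    (ρ : {x // x ∈ R}) (gs : {x // x ∈ R} → Vec N) : Vec N :=
  fun i => fderiv ℝ V gs (Pi.single ρ (Pi.single i 1))

/-- The finite-difference stencil `Du(ℓ) = (D_ρ u(ℓ))_{ρ ∈ R}`. -/
def Dstencil {d N : ℕ} (R : Finset (Vec d)) (u : Vec d → Vec N) (ℓ : Vec d) :
    {x // x ∈ R} → Vec N :=
  fun ρ => D1 (ρ : Vec d) u ℓ

/-- `C_{σρ} = ∂²V/∂g_σ ∂g_ρ (0)`. -/
def CofV {d N : ℕ} (R : Finset (Vec d)) (V : ({x // x ∈ R} → Vec N) → ℝ)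
    (σ ρ : Vec d) (i j : Fin N) : ℝ :=
  if hσ : σ ∈ R then
    if hρ : ρ ∈ R then
      iteratedFDeriv ℝ 2 V 0
        ![Pi.single ⟨σ, hσ⟩ (Pi.single i 1), Pi.single ⟨ρ, hρ⟩ (Pi.single j 1)]
    else 0
  else 0

/-- Summand of the first variation `δE(u)[v]` at a site. -/
def deltaEsite {d N : ℕ} (R : Finset (Vec d)) (V : ({x // x ∈ R} → Vec N) → ℝ)
    (u v : Vec d → Vec N) (ℓ : Vec d) : ℝ :=
  ∑ ρ ∈ R.attach, dotV (gradV R V ρ (Dstencil R u ℓ)) (D1 (ρ : Vec d) v ℓ)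

/-- The pointwise atomistic force `δE(u)(ℓ)`. -/
def deltaEpt {d N : ℕ} (R : Finset (Vec d)) (V : ({x // x ∈ R} → Vec N) → ℝ)
    (u : Vec d → Vec N) (ℓ : Vec d) : Vec N :=
  ∑ ρ ∈ R.attach,
    (gradV R V ρ (Dstencil R u (ℓ - (ρ : Vec d))) - gradV R V ρ (Dstencil R u ℓ))

/-- Point symmetry of the site potential. -/
def PointSym {d N : ℕ} (R : Finset (Vec d)) (hRsym : ∀ ρ ∈ R, -ρ ∈ R)
    (V : ({x // x ∈ R} → Vec N) → ℝ) : Prop :=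
  ∀ gs : {x // x ∈ R} → Vec N,
    V (fun ρ => -(gs ⟨-(ρ : Vec d), hRsym _ ρ.2⟩)) = V gs

/-- The Cauchy–Born elasticity tensor `ℂ_{iajb}`. -/
def CB {d N : ℕ} (A : Matrix (Fin d) (Fin d) ℝ) (R : Finset (Vec d))
    (C : Vec d → Vec d → Fin N → Fin N → ℝ)
    (i : Fin N) (a : Fin d) (j : Fin N) (b : Fin d) : ℝ :=
  (|A.det|)⁻¹ * ∑ ρ ∈ R, ∑ σ ∈ R, C ρ σ i j * ρ a * σ b

/-!
Summation by parts against the Green's function represents a first difference `D_b u(ℓ)` as a sum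
of `f(m) K(m - ℓ)` over `m`, where `f = H[u]` and `K(z) = O(|z| ^ (1 - d))` is a difference of the
Green's function; no boundary term survives, because `Du → 0` at infinity. As `f` has vanishing
moments of orders below `p`, the discrete Taylor polynomial of order `p - 1` of `m ↦ K(m - ℓ)` at
`m = 0` may be subtracted from the kernel. The remainder is `O(|ℓ| ^ (1 - d - p) |m| ^ p)` for
`|m| ≤ |ℓ| / 2`, and the sum of `⟨m⟩ ^ (-d) (log ⟨m⟩) ^ α` over that ball costs the extra
logarithm; for larger `m` the decay of `f` needs no cancellation. A second difference falls on the
kernel. Beyond that, a difference `D^n u` solves the same equation with right-hand side `D^n f`,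
which has `n` more vanishing moments.
-/

/-! ### Logarithmic power weights -/

section Weights

variable {E F V : Type*} [SeminormedAddCommGroup E] [SeminormedAddCommGroup F]

/-- The regularised modulus `⟨x⟩ = ‖x‖ + 2`, bounded away from the zero of the logarithm. On `ℤ^d`
the norm is the sup norm. -/
def bracket (x : E) : ℝ := ‖x‖ + 2

/-- The weight `x ^ e (log x) ^ α` measuring decay rates; it is evaluated at `x = ⟨z⟩ ≥ 2`. -/
def logWeight (e : ℝ) (α : ℕ) (x : ℝ) : ℝ := x ^ e * Real.log x ^ α

/-- `ψ(z) = O(⟨z⟩ ^ e (log ⟨z⟩) ^ α)`, with one constant for all `z`. -/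
abbrev HasDecay [Norm V] (e : ℝ) (α : ℕ) (ψ : E → V) : Prop :=
  ψ =O[⊤] fun z => logWeight e α (bracket z)

lemma two_le_bracket (x : E) : 2 ≤ bracket x := le_add_of_nonneg_left (norm_nonneg x)

lemma bracket_pos (x : E) : 0 < bracket x := two_pos.trans_le (two_le_bracket x)

lemma one_le_two_mul_log {x : ℝ} (hx : 2 ≤ x) : 1 ≤ 2 * Real.log x := by
  have hinv : x⁻¹ ≤ 2⁻¹ := inv_anti₀ two_pos hx
  linarith [Real.one_sub_inv_le_log_of_pos (two_pos.trans_le hx)]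

lemma log_pos_of_two_le {x : ℝ} (hx : 2 ≤ x) : 0 < Real.log x :=
  Real.log_pos (one_lt_two.trans_le hx)

lemma logWeight_pos (e : ℝ) (α : ℕ) {x : ℝ} (hx : 2 ≤ x) : 0 < logWeight e α x :=
  mul_pos (Real.rpow_pos_of_pos (two_pos.trans_le hx) e) (pow_pos (log_pos_of_two_le hx) α)

lemma logWeight_bracket_pos (e : ℝ) (α : ℕ) (z : E) : 0 < logWeight e α (bracket z) :=
  logWeight_pos e α (two_le_bracket z)

lemma rpow_mul_logWeight (e e' : ℝ) (α : ℕ) {x : ℝ} (hx : 0 < x) :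
    x ^ e * logWeight e' α x = logWeight (e + e') α x := by
  rw [logWeight, logWeight, ← mul_assoc, Real.rpow_add hx]

lemma logWeight_mul_logWeight (e e' : ℝ) (α β : ℕ) {x : ℝ} (hx : 0 < x) :
    logWeight e α x * logWeight e' β x = logWeight (e + e') (α + β) x := by
  rw [logWeight, logWeight, logWeight, mul_mul_mul_comm, Real.rpow_add hx, pow_add]

lemma logWeight_zero_right (e x : ℝ) : logWeight e 0 x = x ^ e := by
  rw [logWeight, pow_zero, mul_one]

lemma logWeight_le_logWeight {e e' x : ℝ} (he : e ≤ e') (α : ℕ) (hx : 2 ≤ x) :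
    logWeight e α x ≤ logWeight e' α x :=
  mul_le_mul_of_nonneg_right (Real.rpow_le_rpow_of_exponent_le (by linarith) he)
    (pow_nonneg (log_pos_of_two_le hx).le α)

lemma logWeight_le_two_mul_logWeight_succ (e : ℝ) (α : ℕ) {x : ℝ} (hx : 2 ≤ x) :
    logWeight e α x ≤ 2 * logWeight e (α + 1) x := by
  have h := le_mul_of_one_le_right (logWeight_pos e α hx).le (one_le_two_mul_log hx)
  calc logWeight e α x ≤ logWeight e α x * (2 * Real.log x) := h
    _ = 2 * logWeight e (α + 1) x := by rw [logWeight, logWeight]; ring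

lemma log_le_mul_log_of_le_mul {K x y : ℝ} (hx : 0 < x) (hy : 2 ≤ y) (hK : 1 ≤ K)
    (hxy : x ≤ K * y) : Real.log x ≤ (1 + 2 * Real.log K) * Real.log y := by
  have hlog : Real.log x ≤ Real.log K + Real.log y := by
    rw [← Real.log_mul (by positivity) (by positivity)]
    exact Real.log_le_log hx hxy
  nlinarith [Real.log_nonneg hK, one_le_two_mul_log hy]

lemma rpow_le_mul_rpow_of_comparable (e : ℝ) {K x y : ℝ} (hx : 0 < x) (hy : 0 < y)
    (hK : 0 < K) (hxy : x ≤ K * y) (hyx : y ≤ K * x) : x ^ e ≤ K ^ |e| * y ^ e := by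
  rcases le_total 0 e with he | he
  · rw [abs_of_nonneg he, ← Real.mul_rpow hK.le hy.le]
    exact Real.rpow_le_rpow hx.le hxy he
  · have h : (K * x) ^ e ≤ y ^ e := Real.rpow_le_rpow_of_nonpos hy hyx he
    rw [Real.mul_rpow hK.le hx.le] at h
    rw [abs_of_nonpos he, Real.rpow_neg hK.le]
    exact (le_inv_mul_iff₀ (Real.rpow_pos_of_pos hK e)).2 h

lemma exists_logWeight_le_of_comparable (e : ℝ) (α : ℕ) {K : ℝ} (hK : 1 ≤ K) :
    ∃ C : ℝ, ∀ x y : ℝ, 2 ≤ x → 2 ≤ y → x ≤ K * y → y ≤ K * x →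
      logWeight e α x ≤ C * logWeight e α y := by
  refine ⟨K ^ |e| * (1 + 2 * Real.log K) ^ α, fun x y hx hy hxy hyx => ?_⟩
  have hx₀ : 0 < x := two_pos.trans_le hx
  have hrpow := rpow_le_mul_rpow_of_comparable e hx₀ (two_pos.trans_le hy) (by linarith) hxy hyx
  have hlog := pow_le_pow_left₀ (log_pos_of_two_le hx).le
    (log_le_mul_log_of_le_mul hx₀ hy hK hxy) α
  calc logWeight e α x
      ≤ (K ^ |e| * y ^ e) * ((1 + 2 * Real.log K) * Real.log y) ^ α :=
        mul_le_mul hrpow hlog (pow_nonneg (log_pos_of_two_le hx).le α) (by positivity)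
    _ = K ^ |e| * (1 + 2 * Real.log K) ^ α * logWeight e α y := by rw [logWeight, mul_pow]; ring

lemma exists_log_pow_le_rpow_div_mul (α : ℕ) {t : ℝ} (ht : 0 < t) :
    ∃ C : ℝ, 0 ≤ C ∧ ∀ x y : ℝ, 2 ≤ y → y ≤ x →
      Real.log x ^ α ≤ C * (x / y) ^ t * Real.log y ^ α := by
  rcases Nat.eq_zero_or_pos α with rfl | hα
  · refine ⟨1, zero_le_one, fun x y hy hyx => ?_⟩
    simpa using Real.one_le_rpow ((one_le_div (by linarith)).2 hyx) ht.le
  have hα' : (0 : ℝ) < α := Nat.cast_pos.2 hα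
  set s : ℝ := t / α with hs
  have hs₀ : 0 < s := by positivity
  refine ⟨(1 + 2 / s) ^ α, by positivity, fun x y hy hyx => ?_⟩
  have hy₀ : 0 < y := by linarith
  have hq : 1 ≤ x / y := (one_le_div hy₀).2 hyx
  have hlog : Real.log x ≤ (1 + 2 / s) * (x / y) ^ s * Real.log y := by
    have hsplit : Real.log x = Real.log y + Real.log (x / y) := by
      rw [Real.log_div (by linarith) (by linarith)]; ring
    have hone : 1 ≤ (x / y) ^ s := Real.one_le_rpow hq hs₀.le
    have hsmall : (x / y) ^ s / s ≤ (x / y) ^ s / s * (2 * Real.log y) :=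
      le_mul_of_one_le_right (by positivity) (one_le_two_mul_log hy)
    have hfirst : Real.log y ≤ (x / y) ^ s * Real.log y :=
      le_mul_of_one_le_left (log_pos_of_two_le hy).le hone
    calc Real.log x ≤ Real.log y + (x / y) ^ s / s := by
          rw [hsplit]; gcongr; exact Real.log_le_rpow_div (by linarith) hs₀
      _ ≤ (x / y) ^ s * Real.log y + (x / y) ^ s / s * (2 * Real.log y) := by gcongr
      _ = (1 + 2 / s) * (x / y) ^ s * Real.log y := by ring
  have hpow : ((x / y) ^ s) ^ α = (x / y) ^ t := by
    rw [← Real.rpow_natCast, ← Real.rpow_mul (by linarith), hs, div_mul_cancel₀ _ hα'.ne']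
  calc Real.log x ^ α ≤ ((1 + 2 / s) * (x / y) ^ s * Real.log y) ^ α :=
        pow_le_pow_left₀ (Real.log_nonneg (by linarith)) hlog α
    _ = (1 + 2 / s) ^ α * (x / y) ^ t * Real.log y ^ α := by rw [mul_pow, mul_pow, hpow]

lemma exists_logWeight_le_rpow_div_mul (e : ℝ) (α : ℕ) {t : ℝ} (ht : 0 < t) :
    ∃ C : ℝ, 0 ≤ C ∧ ∀ x y : ℝ, 2 ≤ y → y ≤ x →
      logWeight e α x ≤ C * (x / y) ^ (e + t) * logWeight e α y := by
  obtain ⟨C, hC, hlog⟩ := exists_log_pow_le_rpow_div_mul α ht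
  refine ⟨C, hC, fun x y hy hyx => ?_⟩
  have hy₀ : 0 < y := by linarith
  have hx₀ : 0 < x := by linarith
  have hsplit : x ^ e * (x / y) ^ t = (x / y) ^ (e + t) * y ^ e := by
    rw [Real.rpow_add (by positivity), Real.div_rpow hx₀.le hy₀.le e]
    field_simp
  calc logWeight e α x ≤ x ^ e * (C * (x / y) ^ t * Real.log y ^ α) :=
        mul_le_mul_of_nonneg_left (hlog x y hy hyx) (by positivity)
    _ = C * (x ^ e * (x / y) ^ t) * Real.log y ^ α := by ring
    _ = C * (x / y) ^ (e + t) * logWeight e α y := by rw [hsplit, logWeight]; ring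

lemma bracket_add_le (x a : E) : bracket (x + a) ≤ (1 + ‖a‖) * bracket x := by
  unfold bracket
  nlinarith [norm_add_le x a, norm_nonneg x, norm_nonneg a]

lemma bracket_le_bracket_add (x a : E) : bracket x ≤ (1 + ‖a‖) * bracket (x + a) := by
  simpa using bracket_add_le (x + a) (-a)

namespace HasDecay

variable [Norm V] {e e' : ℝ} {α : ℕ} {ψ : E → V}

lemma exists_bound (h : HasDecay e α ψ) :
    ∃ C : ℝ, 0 ≤ C ∧ ∀ z, ‖ψ z‖ ≤ C * logWeight e α (bracket z) := by
  obtain ⟨C, hC, hψ⟩ := Asymptotics.IsBigO.exists_nonneg h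
  refine ⟨C, hC, fun z => ?_⟩
  simpa only [Real.norm_of_nonneg (logWeight_bracket_pos e α z).le] using
    Asymptotics.isBigOWith_top.1 hψ z

lemma of_bound (C : ℝ) (h : ∀ z, ‖ψ z‖ ≤ C * logWeight e α (bracket z)) : HasDecay e α ψ :=
  Asymptotics.isBigO_top.2
    ⟨C, fun z => (h z).trans_eq (by rw [Real.norm_of_nonneg (logWeight_bracket_pos e α z).le])⟩

lemma mono (he : e ≤ e') (h : HasDecay e α ψ) : HasDecay e' α ψ := by
  obtain ⟨C, hC, hψ⟩ := h.exists_bound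
  exact of_bound C fun z => (hψ z).trans
    (mul_le_mul_of_nonneg_left (logWeight_le_logWeight he α (two_le_bracket z)) hC)

lemma comp_of_comparable {g : F → E} {K : ℝ} (hK : 1 ≤ K)
    (hle : ∀ z, bracket (g z) ≤ K * bracket z) (hge : ∀ z, bracket z ≤ K * bracket (g z))
    (h : HasDecay e α ψ) : HasDecay e α (ψ ∘ g) := by
  obtain ⟨C, hC, hψ⟩ := h.exists_bound
  obtain ⟨C', hcomp⟩ := exists_logWeight_le_of_comparable e α hK
  refine of_bound (C * C') fun z => (hψ (g z)).trans ?_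
  rw [mul_assoc]
  exact mul_le_mul_of_nonneg_left
    (hcomp _ _ (two_le_bracket _) (two_le_bracket _) (hle z) (hge z)) hC

lemma comp_add_right (h : HasDecay e α ψ) (a : E) : HasDecay e α fun z => ψ (z + a) :=
  h.comp_of_comparable (g := (· + a)) (K := 1 + ‖a‖) (by linarith [norm_nonneg a])
    (bracket_add_le · a) (bracket_le_bracket_add · a)

lemma mul {f g : E → ℝ} {β : ℕ} (hf : HasDecay e α f) (hg : HasDecay e' β g) :
    HasDecay (e + e') (α + β) fun z => f z * g z :=
  (Asymptotics.IsBigO.mul hf hg).congr_right fun z =>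
    logWeight_mul_logWeight e e' α β (bracket_pos z)

end HasDecay

lemma tendsto_bracket_cofinite {E : Type*} [NormedAddCommGroup E] [ProperSpace E]
    [DiscreteTopology E] : Tendsto (bracket : E → ℝ) cofinite atTop := by
  have h := tendsto_atTop_add_const_right (cocompact E) (2 : ℝ)
    (tendsto_norm_cocompact_atTop (E := E))
  rwa [cocompact_eq_cofinite] at h

lemma HasDecay.isLittleO_rpow {E : Type*} [NormedAddCommGroup E] [ProperSpace E]
    [DiscreteTopology E] [Norm V] {e e' : ℝ} {α : ℕ} {ψ : E → V} (h : HasDecay e α ψ)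
    (he : e < e') : ψ =o[cofinite] fun z => bracket z ^ e' := by
  have hlog : (fun x : ℝ => logWeight e α x) =o[atTop] fun x => x ^ e' := by
    have h := isLittleO_log_rpow_rpow_atTop (r := α) (s := e' - e) (sub_pos.2 he)
    refine ((Asymptotics.isBigO_refl (fun x : ℝ => x ^ e) atTop).mul_isLittleO h).congr'
      (Eventually.of_forall fun x => by simp [logWeight]) ?_
    filter_upwards [eventually_gt_atTop 0] with x hx
    rw [← Real.rpow_add hx, add_sub_cancel]
  exact (Asymptotics.IsBigO.mono h le_top).trans_isLittleO
    (hlog.comp_tendsto tendsto_bracket_cofinite)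

end Weights

/-! ### Sums of radial weights over `ℤ^d` -/

section LatticeSums

variable {d : ℕ}

lemma exists_natCast_eq_norm (z : Fin d → ℤ) : ∃ n : ℕ, (n : ℝ) = ‖z‖ := by
  refine ⟨Finset.univ.sup fun i => (z i).natAbs, le_antisymm ?_ ?_⟩
  · have h : (Finset.univ.sup fun i => (z i).natAbs) ≤ ⌊‖z‖⌋₊ := Finset.sup_le fun i _ =>
      Nat.le_floor (by simpa [Nat.cast_natAbs, Int.norm_eq_abs] using norm_le_pi_norm z i)
    exact (Nat.cast_le.2 h).trans (Nat.floor_le (norm_nonneg z))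
  · refine (pi_norm_le_iff_of_nonneg (Nat.cast_nonneg _)).2 fun i => ?_
    rw [Int.norm_eq_abs, ← Int.cast_abs, ← Nat.cast_natAbs]
    exact_mod_cast Finset.le_sup (f := fun i => (z i).natAbs) (Finset.mem_univ i)

lemma natCast_floor_norm (z : Fin d → ℤ) : (⌊‖z‖⌋₊ : ℝ) = ‖z‖ := by
  obtain ⟨n, hn⟩ := exists_natCast_eq_norm z
  rw [← hn, Nat.floor_natCast]

lemma mem_Icc_neg_iff_norm_le (n : ℕ) (z : Fin d → ℤ) :
    z ∈ Finset.Icc (-(n : Fin d → ℤ)) n ↔ ‖z‖ ≤ n := by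
  rw [pi_norm_le_iff_of_nonneg (Nat.cast_nonneg n), Finset.mem_Icc, Pi.le_def, Pi.le_def,
    ← forall_and]
  refine forall_congr' fun i => ?_
  rw [Int.norm_eq_abs, ← Int.cast_abs, ← Int.cast_natCast (R := ℝ) n, Int.cast_le, abs_le]
  rfl

lemma card_Icc_neg (d n : ℕ) :
    (Finset.Icc (-(n : Fin d → ℤ)) n).card = (2 * n + 1) ^ d := by
  rw [Pi.card_Icc]
  simp only [Pi.neg_apply, Pi.natCast_apply, Int.card_Icc, Finset.prod_const, Finset.card_univ,
    Fintype.card_fin]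
  congr 1
  omega

lemma card_le_of_forall_norm_eq_succ (k : ℕ) (T : Finset (Fin d → ℤ))
    (hT : ∀ z ∈ T, ‖z‖ = (k + 1 : ℕ)) :
    (T.card : ℝ) ≤ d * 2 ^ d * ((k + 1 : ℕ) + 2 : ℝ) ^ (d - 1) := by
  have hsub : T ⊆ Finset.Icc (-((k + 1 : ℕ) : Fin d → ℤ)) (k + 1 : ℕ) \
      Finset.Icc (-(k : Fin d → ℤ)) k := fun z hz => by
    rw [Finset.mem_sdiff, mem_Icc_neg_iff_norm_le, mem_Icc_neg_iff_norm_le, hT z hz]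
    exact ⟨le_rfl, by push_cast; linarith⟩
  have hIcc : Finset.Icc (-(k : Fin d → ℤ)) k ⊆
      Finset.Icc (-((k + 1 : ℕ) : Fin d → ℤ)) (k + 1 : ℕ) := fun z hz => by
    rw [mem_Icc_neg_iff_norm_le] at hz ⊢
    exact hz.trans (by push_cast; linarith)
  have hcard := Finset.card_le_card hsub
  have hsdiff := Finset.card_sdiff_add_card_eq_card hIcc
  rw [card_Icc_neg, card_Icc_neg] at hsdiff
  have hpow := (le_abs_self _).trans
    (abs_pow_sub_pow_le (α := ℝ) (2 * (k + 1 : ℕ) + 1) (2 * k + 1) d)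
  rw [abs_of_nonneg (show (0 : ℝ) ≤ 2 * (k + 1 : ℕ) + 1 by positivity),
    abs_of_nonneg (show (0 : ℝ) ≤ 2 * k + 1 by positivity),
    max_eq_left (by push_cast; linarith)] at hpow
  have hgap : |(2 * (k + 1 : ℕ) + 1 : ℝ) - (2 * k + 1)| = 2 := by
    rw [show (2 * (k + 1 : ℕ) + 1 : ℝ) - (2 * k + 1) = 2 by push_cast; ring]; norm_num
  have hdiff : (T.card : ℝ) ≤ (2 * (k + 1 : ℕ) + 1) ^ d - (2 * k + 1) ^ d := by
    have : T.card + (2 * k + 1) ^ d ≤ (2 * (k + 1) + 1) ^ d := by omega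
    rw [le_sub_iff_add_le]
    exact_mod_cast this
  rcases Nat.eq_zero_or_pos d with rfl | hd
  · simpa using hdiff
  calc (T.card : ℝ) ≤ 2 * d * (2 * (k + 1 : ℕ) + 1) ^ (d - 1) := by
        rw [hgap] at hpow; exact hdiff.trans hpow
    _ ≤ 2 * d * (2 * ((k + 1 : ℕ) + 2)) ^ (d - 1) := by gcongr; linarith
    _ = d * 2 ^ d * ((k + 1 : ℕ) + 2 : ℝ) ^ (d - 1) := by
        rw [mul_pow, ← Nat.succ_pred_eq_of_pos hd]; simp only [Nat.succ_sub_one, pow_succ]; ring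

lemma card_le_of_forall_norm_eq (n : ℕ) (T : Finset (Fin d → ℤ)) (hT : ∀ z ∈ T, ‖z‖ = n) :
    (T.card : ℝ) ≤ (d + 1) * 2 ^ d * (n + 2 : ℝ) ^ (d - 1) := by
  cases n with
  | zero =>
    have hsub : T ⊆ {0} := fun z hz => by simpa using hT z hz
    have hcard : (T.card : ℝ) ≤ 1 := mod_cast Finset.card_le_card hsub
    have hpow : (1 : ℝ) ≤ 2 ^ d * ((0 : ℕ) + 2 : ℝ) ^ (d - 1) :=
      one_le_mul_of_one_le_of_one_le (one_le_pow₀ one_le_two) (one_le_pow₀ (by norm_num))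
    rw [mul_assoc]
    nlinarith [Nat.cast_nonneg (α := ℝ) d]
  | succ k =>
    refine (card_le_of_forall_norm_eq_succ k T hT).trans ?_
    gcongr
    linarith

lemma sum_radial_le (φ : ℕ → ℝ) (hφ : ∀ n, 0 ≤ φ n) (T : Finset (Fin d → ℤ)) :
    ∑ z ∈ T, φ ⌊‖z‖⌋₊ ≤
      (d + 1) * 2 ^ d * ∑ n ∈ T.image (⌊‖·‖⌋₊), (n + 2 : ℝ) ^ (d - 1) * φ n := by
  rw [Finset.mul_sum, ← Finset.sum_fiberwise_of_maps_to (t := T.image (⌊‖·‖⌋₊))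
    (g := (⌊‖·‖⌋₊)) fun z hz => Finset.mem_image_of_mem _ hz]
  refine Finset.sum_le_sum fun n _ => ?_
  have hfiber : ∑ z ∈ T with ⌊‖z‖⌋₊ = n, φ ⌊‖z‖⌋₊ =
      ((T.filter fun z => ⌊‖z‖⌋₊ = n).card : ℝ) * φ n := by
    rw [← nsmul_eq_mul, ← Finset.sum_const]
    exact Finset.sum_congr rfl fun z hz => by rw [(Finset.mem_filter.1 hz).2]
  rw [hfiber, ← mul_assoc]
  refine mul_le_mul_of_nonneg_right (card_le_of_forall_norm_eq n _ fun z hz => ?_) (hφ n)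
  rw [← (Finset.mem_filter.1 hz).2, natCast_floor_norm]

lemma sum_bracket_rpow_le (hd : 1 ≤ d) (e : ℝ) (T : Finset (Fin d → ℤ)) :
    ∑ z ∈ T, bracket z ^ (-(d : ℝ) + e) ≤
      (d + 1) * 2 ^ d * ∑ n ∈ T.image (⌊‖·‖⌋₊), (n + 2 : ℝ) ^ (-1 + e) := by
  have h := sum_radial_le (fun n => (n + 2 : ℝ) ^ (-(d : ℝ) + e)) (fun n => by positivity) T
  simp only [natCast_floor_norm] at h
  refine h.trans_eq (congrArg _ (Finset.sum_congr rfl fun n _ => ?_))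
  rw [← Real.rpow_natCast, ← Real.rpow_add (by positivity), Nat.cast_sub hd]
  congr 1
  push_cast
  ring

lemma sum_inv_le_three_mul_log {X : ℝ} (hX : 2 ≤ X) (S : Finset ℕ)
    (hS : ∀ n ∈ S, (n + 2 : ℝ) ≤ X) : ∑ n ∈ S, (n + 2 : ℝ)⁻¹ ≤ 3 * Real.log X := by
  have hsub : S.map (addRightEmbedding 2) ⊆ Finset.Icc 1 ⌊X⌋₊ := fun k hk => by
    obtain ⟨n, hn, rfl⟩ := Finset.mem_map.1 hk
    exact Finset.mem_Icc.2 ⟨by simp, Nat.le_floor (by simpa using hS n hn)⟩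
  calc ∑ n ∈ S, (n + 2 : ℝ)⁻¹ = ∑ k ∈ S.map (addRightEmbedding 2), (k : ℝ)⁻¹ := by
        simp [Finset.sum_map]
    _ ≤ ∑ k ∈ Finset.Icc 1 ⌊X⌋₊, (k : ℝ)⁻¹ :=
        Finset.sum_le_sum_of_subset_of_nonneg hsub fun k _ _ => by positivity
    _ = harmonic ⌊X⌋₊ := by simp [harmonic_eq_sum_Icc]
    _ ≤ 1 + Real.log X := harmonic_floor_le_one_add_log X (by linarith)
    _ ≤ 3 * Real.log X := by linarith [one_le_two_mul_log hX]

lemma one_add_mul_one_sub_le_rpow_neg {x t : ℝ} (hx : 0 < x) (ht : 0 ≤ t) :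
    1 + t * (1 - x) ≤ x ^ (-t) := by
  have hexp := Real.add_one_le_exp (Real.log x * -t)
  rw [← Real.rpow_def_of_pos hx] at hexp
  nlinarith [Real.log_le_sub_one_of_pos hx]

lemma rpow_neg_one_sub_le_telescope {x t : ℝ} (hx : 1 < x) (ht : 0 < t) :
    x ^ (-1 - t) ≤ t⁻¹ * ((x - 1) ^ (-t) - x ^ (-t)) := by
  have hx₀ : 0 < x := by linarith
  have hratio := one_add_mul_one_sub_le_rpow_neg (div_pos (sub_pos.2 hx) hx₀) ht.le
  rw [Real.div_rpow (by linarith) hx₀.le, le_div_iff₀ (by positivity)] at hratio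
  have hone : 1 - (x - 1) / x = x⁻¹ := by field_simp; ring
  rw [hone] at hratio
  rw [sub_eq_add_neg (-1 : ℝ), Real.rpow_add hx₀, Real.rpow_neg_one, le_inv_mul_iff₀ ht]
  linarith

lemma sum_rpow_neg_one_sub_le {t : ℝ} (ht : 0 < t) {X : ℝ} (hX : 2 ≤ X) (S : Finset ℕ)
    (hS : ∀ n ∈ S, X ≤ n + 2) :
    ∑ n ∈ S, (n + 2 : ℝ) ^ (-1 - t) ≤ t⁻¹ * 2 ^ t * X ^ (-t) := by
  obtain ⟨k, hk, hkX⟩ : ∃ k : ℕ, (∀ n ∈ S, k ≤ n) ∧ X / 2 ≤ k + 1 := by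
    refine ⟨⌈X⌉₊ - 2, fun n hn => ?_, ?_⟩
    · have : ⌈X⌉₊ ≤ n + 2 := Nat.ceil_le.2 (by simpa using hS n hn)
      omega
    · have htwo : 2 ≤ ⌈X⌉₊ := by exact_mod_cast hX.trans (Nat.le_ceil X)
      rw [Nat.cast_sub htwo]
      push_cast
      linarith [Nat.le_ceil X]
  obtain ⟨M, hM⟩ : ∃ M, S ⊆ Finset.Ico k (k + M) :=
    ⟨S.sup id + 1, fun n hn => Finset.mem_Ico.2
      ⟨hk n hn, by have := Finset.le_sup (f := id) hn; simp only [id] at this; omega⟩⟩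
  set g : ℕ → ℝ := fun i => ((k + i : ℕ) + 1 : ℝ) ^ (-t) with hg
  calc ∑ n ∈ S, (n + 2 : ℝ) ^ (-1 - t)
      ≤ ∑ n ∈ Finset.Ico k (k + M), (n + 2 : ℝ) ^ (-1 - t) :=
        Finset.sum_le_sum_of_subset_of_nonneg hM fun n _ _ => by positivity
    _ = ∑ i ∈ Finset.range M, ((k + i : ℕ) + 2 : ℝ) ^ (-1 - t) := by
        rw [Finset.sum_Ico_eq_sum_range, add_tsub_cancel_left]
    _ ≤ ∑ i ∈ Finset.range M, t⁻¹ * (g i - g (i + 1)) := by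
        refine Finset.sum_le_sum fun i _ => ?_
        have h := rpow_neg_one_sub_le_telescope (x := (k + i : ℕ) + 2) (by linarith) ht
        have hleft : ((k + i : ℕ) + 2 - 1 : ℝ) = (k + i : ℕ) + 1 := by ring
        have hright : ((k + (i + 1) : ℕ) + 1 : ℝ) = (k + i : ℕ) + 2 := by push_cast; ring
        simpa only [hg, hleft, hright] using h
    _ = t⁻¹ * (g 0 - g M) := by rw [← Finset.mul_sum, Finset.sum_range_sub']
    _ ≤ t⁻¹ * (X / 2) ^ (-t) := by
        gcongr
        have hM₀ : 0 ≤ g M := by positivity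
        have h₀ : g 0 ≤ (X / 2) ^ (-t) :=
          Real.rpow_le_rpow_of_nonpos (by linarith) (by simpa [hg] using hkX) (by linarith)
        linarith
    _ = t⁻¹ * 2 ^ t * X ^ (-t) := by
        rw [Real.div_rpow (by linarith) zero_le_two, Real.rpow_neg zero_le_two, div_inv_eq_mul]
        ring

lemma exists_sum_logWeight_ball_le (hd : 1 ≤ d) (α : ℕ) : ∃ C : ℝ, 0 ≤ C ∧
    ∀ X : ℝ, 2 ≤ X → ∀ T : Finset (Fin d → ℤ), (∀ m ∈ T, bracket m ≤ X) →
      ∑ m ∈ T, logWeight (-(d : ℝ)) α (bracket m) ≤ C * Real.log X ^ (α + 1) := by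
  refine ⟨(d + 1) * 2 ^ d * 3, by positivity, fun X hX T hT => ?_⟩
  have hlogX : 0 ≤ Real.log X := (log_pos_of_two_le hX).le
  have hshell := sum_bracket_rpow_le hd 0 T
  simp only [add_zero, Real.rpow_neg_one] at hshell
  have hharm := sum_inv_le_three_mul_log hX (T.image (⌊‖·‖⌋₊)) fun n hn => by
    obtain ⟨m, hm, rfl⟩ := Finset.mem_image.1 hn
    rw [natCast_floor_norm]
    exact hT m hm
  calc ∑ m ∈ T, logWeight (-(d : ℝ)) α (bracket m)
      ≤ ∑ m ∈ T, bracket m ^ (-(d : ℝ)) * Real.log X ^ α := Finset.sum_le_sum fun m hm =>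
        mul_le_mul_of_nonneg_left
          (pow_le_pow_left₀ (log_pos_of_two_le (two_le_bracket m)).le
            (Real.log_le_log (bracket_pos m) (hT m hm)) α)
          (Real.rpow_nonneg (bracket_pos m).le _)
    _ = (∑ m ∈ T, bracket m ^ (-(d : ℝ))) * Real.log X ^ α := (Finset.sum_mul ..).symm
    _ ≤ ((d + 1) * 2 ^ d * (3 * Real.log X)) * Real.log X ^ α := by
        gcongr
        exact hshell.trans (by gcongr)
    _ = (d + 1) * 2 ^ d * 3 * Real.log X ^ (α + 1) := by ring

lemma exists_sum_logWeight_tail_le (hd : 1 ≤ d) (α : ℕ) {s : ℝ} (hs : 0 < s) : ∃ C : ℝ, 0 ≤ C ∧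
    ∀ X : ℝ, 2 ≤ X → ∀ T : Finset (Fin d → ℤ), (∀ m ∈ T, X ≤ bracket m) →
      ∑ m ∈ T, logWeight (-(d : ℝ) - s) α (bracket m) ≤ C * logWeight (-s) α X := by
  obtain ⟨C, hC, hgrowth⟩ := exists_logWeight_le_rpow_div_mul (-(d : ℝ) - s) α (half_pos hs)
  refine ⟨C * ((d + 1) * 2 ^ d * ((s / 2)⁻¹ * 2 ^ (s / 2))), by positivity, fun X hX T hT => ?_⟩
  have hX₀ : 0 < X := by linarith
  have hexp : -(d : ℝ) - s + s / 2 = -d + -(s / 2) := by ring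
  have hw := logWeight_pos (-(d : ℝ) - s) α hX
  have hshell := sum_bracket_rpow_le hd (-(s / 2)) T
  have htail := sum_rpow_neg_one_sub_le (half_pos hs) hX (T.image (⌊‖·‖⌋₊)) fun n hn => by
    obtain ⟨m, hm, rfl⟩ := Finset.mem_image.1 hn
    rw [natCast_floor_norm]
    exact hT m hm
  calc ∑ m ∈ T, logWeight (-(d : ℝ) - s) α (bracket m)
      ≤ ∑ m ∈ T, C * (bracket m / X) ^ (-(d : ℝ) + -(s / 2)) * logWeight (-(d : ℝ) - s) α X :=
        Finset.sum_le_sum fun m hm => by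
          rw [← hexp]; exact hgrowth _ _ hX (hT m hm)
    _ = C * (∑ m ∈ T, bracket m ^ (-(d : ℝ) + -(s / 2))) *
          (X ^ (d + s / 2) * logWeight (-(d : ℝ) - s) α X) := by
        rw [Finset.mul_sum, Finset.sum_mul]
        refine Finset.sum_congr rfl fun m _ => ?_
        rw [Real.div_rpow (bracket_pos m).le hX₀.le, div_eq_mul_inv, ← Real.rpow_neg hX₀.le]
        ring_nf
    _ ≤ C * ((d + 1) * 2 ^ d * ((s / 2)⁻¹ * 2 ^ (s / 2) * X ^ (-(s / 2)))) *
          (X ^ (d + s / 2) * logWeight (-(d : ℝ) - s) α X) := by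
        gcongr
        exact hshell.trans (by gcongr; simpa only [← sub_eq_add_neg] using htail)
    _ = C * ((d + 1) * 2 ^ d * ((s / 2)⁻¹ * 2 ^ (s / 2))) * logWeight (-s) α X := by
        rw [show logWeight (-s) α X =
          X ^ (-(s / 2)) * (X ^ (d + s / 2) * logWeight (-(d : ℝ) - s) α X) by
            rw [rpow_mul_logWeight _ _ _ hX₀, rpow_mul_logWeight _ _ _ hX₀]; congr 1; ring]
        ring

lemma HasDecay.summable {V : Type*} [NormedAddCommGroup V] [CompleteSpace V] (hd : 1 ≤ d)
    {e : ℝ} {α : ℕ} {ψ : (Fin d → ℤ) → V} (h : HasDecay e α ψ) (he : e < -d) : Summable ψ := by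
  obtain ⟨C, -, hψ⟩ := h.exists_bound
  obtain ⟨C', -, hsum⟩ := exists_sum_logWeight_tail_le hd α (s := -d - e) (by linarith)
  rw [sub_sub_cancel] at hsum
  have hw : Summable fun m : Fin d → ℤ => logWeight e α (bracket m) :=
    summable_of_sum_le (fun m => (logWeight_bracket_pos e α m).le)
      fun T => hsum 2 le_rfl T fun m _ => two_le_bracket m
  exact .of_norm_bounded (hw.mul_left C) hψ

end LatticeSums

/-! ### Iterated forward differences -/

open fwdDiff

section IteratedDifferences

variable {G V : Type*} [AddCommGroup V]

section Monoid

variable [AddCommMonoid G]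

lemma fwdDiff_left_comm (a b : G) (φ : G → V) : Δ_[a] (Δ_[b] φ) = Δ_[b] (Δ_[a] φ) := by
  funext z
  simp only [fwdDiff, add_right_comm z b a]
  abel

instance : LeftCommutative (fwdDiff : G → (G → V) → G → V) := ⟨fwdDiff_left_comm⟩

/-- The iterated difference `Δ_{a₁} ⋯ Δ_{aₖ} φ` along the multiset `{a₁, …, aₖ}` of steps; a
multiset suffices because differences commute. -/
def fwdDiffs (s : Multiset G) (φ : G → V) : G → V :=
  s.foldr fwdDiff φ

@[simp] lemma fwdDiffs_zero (φ : G → V) : fwdDiffs 0 φ = φ := Multiset.foldr_zero _ φ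

@[simp] lemma fwdDiffs_cons (a : G) (s : Multiset G) (φ : G → V) :
    fwdDiffs (a ::ₘ s) φ = Δ_[a] (fwdDiffs s φ) := Multiset.foldr_cons _ φ a s

@[simp] lemma fwdDiffs_singleton (a : G) (φ : G → V) : fwdDiffs {a} φ = Δ_[a] φ := by
  rw [← Multiset.cons_zero, fwdDiffs_cons, fwdDiffs_zero]

lemma fwdDiffs_add (s t : Multiset G) (φ : G → V) :
    fwdDiffs (s + t) φ = fwdDiffs s (fwdDiffs t φ) := Multiset.foldr_add _ φ s t

lemma fwdDiffs_fwdDiff (s : Multiset G) (a : G) (φ : G → V) :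
    fwdDiffs s (Δ_[a] φ) = Δ_[a] (fwdDiffs s φ) := by
  rw [← fwdDiffs_cons, ← Multiset.singleton_add, add_comm, fwdDiffs_add, fwdDiffs_singleton]

lemma fwdDiffs_comp_add_right (s : Multiset G) (φ : G → V) (a : G) :
    fwdDiffs s (fun z => φ (z + a)) = fun z => fwdDiffs s φ (z + a) := by
  induction s using Multiset.induction with
  | empty => rfl
  | cons b s ih =>
    funext z
    simp only [fwdDiffs_cons, ih, fwdDiff, add_right_comm z b a]

end Monoid

variable [AddCommGroup G] {M : AddSubgroup (G → V)} {S : Set G} {φ : G → V}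

lemma fwdDiff_mem_of_closure_eq_top (hM : ∀ ψ ∈ M, ∀ a, (fun z => ψ (z + a)) ∈ M)
    (hS : AddSubgroup.closure S = ⊤) (h : ∀ a ∈ S, Δ_[a] φ ∈ M) (a : G) : Δ_[a] φ ∈ M := by
  have ha : a ∈ AddSubgroup.closure S := hS ▸ AddSubgroup.mem_top a
  induction ha using AddSubgroup.closure_induction with
  | mem a ha => exact h a ha
  | zero =>
    have hzero : Δ_[(0 : G)] φ = 0 := by funext z; simp [fwdDiff]
    exact hzero ▸ M.zero_mem
  | add a b _ _ iha ihb =>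
    have hadd : Δ_[a + b] φ = (fun z => (Δ_[b] φ) (z + a)) + Δ_[a] φ := by
      funext z; simp [fwdDiff, add_assoc]
    exact hadd ▸ M.add_mem (hM _ ihb a) iha
  | neg a _ iha =>
    have hneg : Δ_[-a] φ = -fun z => (Δ_[a] φ) (z + -a) := by
      funext z; simp [fwdDiff]
    exact hneg ▸ M.neg_mem (hM _ iha (-a))

/-- Differences along generators control all differences of the same order: the steps are
exchanged for generators one at a time. -/
lemma fwdDiffs_mem_of_closure_eq_top (hM : ∀ ψ ∈ M, ∀ a, (fun z => ψ (z + a)) ∈ M)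
    (hS : AddSubgroup.closure S = ⊤) {n : ℕ}
    (h : ∀ s : Multiset G, s.card = n → (∀ a ∈ s, a ∈ S) → fwdDiffs s φ ∈ M)
    {s : Multiset G} (hs : s.card = n) : fwdDiffs s φ ∈ M := by
  suffices hmixed : ∀ t s : Multiset G, (t + s).card = n → (∀ a ∈ s, a ∈ S) →
      fwdDiffs (t + s) φ ∈ M by
    simpa using hmixed s 0 (by simpa using hs) (by simp)
  intro t
  induction t using Multiset.induction with
  | empty => simpa using h
  | cons a t ih =>
    intro s hcard hmem
    rw [Multiset.cons_add, fwdDiffs_cons]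
    refine fwdDiff_mem_of_closure_eq_top hM hS (fun b hb => ?_) a
    rw [← fwdDiffs_cons, ← Multiset.add_cons]
    refine ih (b ::ₘ s) (by simpa [add_assoc, add_comm 1] using hcard) fun c hc => ?_
    rcases Multiset.mem_cons.1 hc with rfl | hc
    exacts [hb, hmem c hc]

end IteratedDifferences

section DecaySubgroup

variable {E V : Type*} [SeminormedAddCommGroup E] [SeminormedAddCommGroup V]

/-- The functions with `HasDecay e α`, as a group; it is translation invariant by
`HasDecay.comp_add_right`. -/
def decaySubgroup (E V : Type*) [SeminormedAddCommGroup E] [SeminormedAddCommGroup V]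
    (e : ℝ) (α : ℕ) : AddSubgroup (E → V) where
  carrier := {ψ | HasDecay e α ψ}
  zero_mem' := Asymptotics.isBigO_zero _ _
  add_mem' := Asymptotics.IsBigO.add
  neg_mem' := Asymptotics.IsBigO.neg_left

lemma HasDecay.fwdDiff {e : ℝ} {α : ℕ} {ψ : E → V} (h : HasDecay e α ψ) (a : E) :
    HasDecay e α (Δ_[a] ψ) := (h.comp_add_right a).sub h

lemma HasDecay.fwdDiffs_of_closure_eq_top {e : ℝ} {α n : ℕ} {ψ : E → V} {S : Set E}
    (hS : AddSubgroup.closure S = ⊤)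
    (h : ∀ s : Multiset E, s.card = n → (∀ a ∈ s, a ∈ S) → HasDecay e α (fwdDiffs s ψ))
    {s : Multiset E} (hs : s.card = n) : HasDecay e α (fwdDiffs s ψ) :=
  fwdDiffs_mem_of_closure_eq_top (M := decaySubgroup E V e α)
    (fun _ hψ a => HasDecay.comp_add_right hψ a) hS h hs

/-- The functions vanishing at infinity on a discrete space, as a group. -/
def vanishingSubgroup (E V : Type*) [SeminormedAddCommGroup V] : AddSubgroup (E → V) where
  carrier := {ψ | Tendsto ψ cofinite (𝓝 0)}
  zero_mem' := tendsto_const_nhds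
  add_mem' h h' := add_zero (0 : V) ▸ Tendsto.add h h'
  neg_mem' h := neg_zero (G := V) ▸ Tendsto.neg h

lemma tendsto_comp_add_right_cofinite {G : Type*} [AddGroup G] {X : Type*} {l : Filter X}
    {ψ : G → X} (h : Tendsto ψ cofinite l) (a : G) :
    Tendsto (fun z => ψ (z + a)) cofinite l :=
  h.comp (add_left_injective a).tendsto_cofinite

lemma tendsto_fwdDiffs_cofinite {G : Type*} [AddCommGroup G] {ψ : G → V}
    (h : Tendsto ψ cofinite (𝓝 0)) (s : Multiset G) : Tendsto (fwdDiffs s ψ) cofinite (𝓝 0) := by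
  induction s using Multiset.induction with
  | empty => exact h
  | cons a s ih =>
    rw [fwdDiffs_cons]
    exact sub_zero (0 : V) ▸ (tendsto_comp_add_right_cofinite ih a).sub ih

lemma tendsto_fwdDiff_of_closure_eq_top {G : Type*} [AddCommGroup G] {ψ : G → V} {S : Set G}
    (hS : AddSubgroup.closure S = ⊤)
    (h : ∀ a ∈ S, Tendsto (Δ_[a] ψ) cofinite (𝓝 0)) (a : G) :
    Tendsto (Δ_[a] ψ) cofinite (𝓝 0) :=
  fwdDiff_mem_of_closure_eq_top (M := vanishingSubgroup G V)
    (fun _ hψ a => tendsto_comp_add_right_cofinite hψ a) hS h a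

end DecaySubgroup

/-! ### Lattice paths -/

section Paths

variable {d : ℕ} {V : Type*} [SeminormedAddCommGroup V]

/-- The length `∑ i, |z i|` of a shortest path from `0` to `z` along the coordinate directions. -/
def pathLength (z : Fin d → ℤ) : ℕ := ∑ i, (z i).natAbs

lemma norm_le_pathLength (z : Fin d → ℤ) : ‖z‖ ≤ pathLength z := by
  refine (pi_norm_le_iff_of_nonneg (Nat.cast_nonneg _)).2 fun i => ?_
  rw [Int.norm_eq_abs, ← Int.cast_abs, ← Nat.cast_natAbs]
  exact_mod_cast Finset.single_le_sum (f := fun i => (z i).natAbs) (fun _ _ => Nat.zero_le _)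
    (Finset.mem_univ i)

lemma pathLength_le (z : Fin d → ℤ) : (pathLength z : ℝ) ≤ d * ‖z‖ := by
  have h := Finset.sum_le_card_nsmul Finset.univ (fun i => ‖z i‖) ‖z‖
    fun i _ => norm_le_pi_norm z i
  simpa [pathLength, Nat.cast_natAbs, Int.norm_eq_abs] using h

lemma pathLength_update (z : Fin d → ℤ) (i : Fin d) (k : ℤ) :
    pathLength (Function.update z i k) + (z i).natAbs = pathLength z + k.natAbs := by
  have h := Finset.sum_update_of_mem (Finset.mem_univ i) (fun i => (z i).natAbs) k.natAbs
  have hcomp : (fun j => (Function.update z i k j).natAbs) =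
      Function.update (fun j => (z j).natAbs) i k.natAbs := by
    funext j; rcases eq_or_ne j i with rfl | hj <;> simp [*]
  rw [pathLength, pathLength, hcomp, h, ← Finset.add_sum_erase _ _ (Finset.mem_univ i),
    Finset.sdiff_singleton_eq_erase]
  ring

lemma norm_update_le (z : Fin d → ℤ) (i : Fin d) {k : ℤ} (hk : ‖k‖ ≤ ‖z i‖) :
    ‖Function.update z i k‖ ≤ ‖z‖ := by
  refine (pi_norm_le_iff_of_nonneg (norm_nonneg z)).2 fun j => ?_
  rcases eq_or_ne j i with rfl | hj
  · simpa using hk.trans (norm_le_pi_norm z j)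
  · simpa [hj] using norm_le_pi_norm z j

lemma exists_neighbour_pathLength {z : Fin d → ℤ} (hz : pathLength z ≠ 0) :
    ∃ (i : Fin d) (w : Fin d → ℤ), pathLength w + 1 = pathLength z ∧ ‖w‖ ≤ ‖z‖ ∧
      (z = w + Pi.single i 1 ∨ w = z + Pi.single i 1) := by
  obtain ⟨i, hi⟩ : ∃ i, (z i).natAbs ≠ 0 := by
    by_contra! h
    exact hz (Finset.sum_eq_zero fun i _ => h i)
  have hupdate (k c : ℤ) (hk : k = z i + c) : Function.update z i k = z + Pi.single i c := by
    funext j; rcases eq_or_ne j i with rfl | hj <;> simp [*]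
  rcases lt_or_gt_of_ne (Int.natAbs_ne_zero.1 hi) with hneg | hpos
  · refine ⟨i, Function.update z i (z i + 1), ?_, norm_update_le z i ?_, .inr (hupdate _ _ rfl)⟩
    · have := pathLength_update z i (z i + 1); omega
    · rw [Int.norm_eq_abs, Int.norm_eq_abs, ← Int.cast_abs, ← Int.cast_abs, Int.cast_le]; grind
  · refine ⟨i, Function.update z i (z i - 1), ?_, norm_update_le z i ?_, .inl ?_⟩
    · have := pathLength_update z i (z i - 1); omega
    · rw [Int.norm_eq_abs, Int.norm_eq_abs, ← Int.cast_abs, ← Int.cast_abs, Int.cast_le]; grind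
    · rw [hupdate (z i - 1) (-1) rfl, add_assoc, ← Pi.single_add, neg_add_cancel, Pi.single_zero,
        add_zero]

lemma norm_le_pathLength_mul_add {ψ : (Fin d → ℤ) → V} {R : ℕ} {r B K : ℝ} (hB : 0 ≤ B)
    (hK : ∀ m, pathLength m ≤ R → ‖ψ m‖ ≤ K)
    (hψ : ∀ z, R ≤ pathLength z → ‖z‖ ≤ r → ∀ i, ‖(Δ_[Pi.single i 1] ψ) z‖ ≤ B)
    {m : Fin d → ℤ} (hm : ‖m‖ ≤ r) : ‖ψ m‖ ≤ pathLength m * B + K := by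
  induction hn : pathLength m generalizing m with
  | zero => simpa using hK m (by omega)
  | succ n ih =>
    by_cases hR : pathLength m ≤ R
    · exact (hK m hR).trans (le_add_of_nonneg_left (by positivity))
    obtain ⟨i, w, hlen, hwm, hstep⟩ := exists_neighbour_pathLength (z := m) (by omega)
    have hdist : ‖ψ m - ψ w‖ ≤ B := by
      rcases hstep with rfl | rfl
      · exact hψ w (by omega) (hwm.trans hm) i
      · rw [norm_sub_rev]
        exact hψ m (by omega) hm i
    calc ‖ψ m‖ = ‖(ψ m - ψ w) + ψ w‖ := by rw [sub_add_cancel]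
      _ ≤ B + (n * B + K) := norm_add_le_of_le hdist (ih (hwm.trans hm) (by omega))
      _ = (n + 1 : ℕ) * B + K := by push_cast; ring

lemma norm_le_dim_mul_norm_mul {ψ : (Fin d → ℤ) → V} {r B : ℝ} (hB : 0 ≤ B) (h₀ : ψ 0 = 0)
    (hψ : ∀ z, ‖z‖ ≤ r → ∀ i, ‖(Δ_[Pi.single i 1] ψ) z‖ ≤ B)
    {m : Fin d → ℤ} (hm : ‖m‖ ≤ r) : ‖ψ m‖ ≤ d * ‖m‖ * B := by
  have hK : ∀ z : Fin d → ℤ, pathLength z ≤ 0 → ‖ψ z‖ ≤ 0 := fun z hz => by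
    have hle := norm_le_pathLength z
    rw [Nat.le_zero.1 hz, Nat.cast_zero, norm_le_zero_iff] at hle
    rw [hle, h₀, norm_zero]
  have h := norm_le_pathLength_mul_add hB hK (fun z _ => hψ z) hm
  rw [add_zero] at h
  exact h.trans (mul_le_mul_of_nonneg_right (pathLength_le m) hB)

lemma finite_pathLength_le (R : ℕ) : {z : Fin d → ℤ | pathLength z ≤ R}.Finite :=
  (Finset.finite_toSet (Finset.Icc (-(R : Fin d → ℤ)) R)).subset fun z hz =>
    (mem_Icc_neg_iff_norm_le R z).2 ((norm_le_pathLength z).trans (Nat.cast_le.2 hz))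

lemma exists_forall_pathLength_ge {P : (Fin d → ℤ) → Prop} (h : ∀ᶠ z in cofinite, P z) :
    ∃ R : ℕ, ∀ z, R ≤ pathLength z → P z := by
  rw [eventually_cofinite] at h
  refine ⟨h.toFinset.sup pathLength + 1, fun z hz => ?_⟩
  by_contra hPz
  have := Finset.le_sup (f := pathLength) (h.mem_toFinset.2 hPz)
  omega

lemma isLittleO_bracket_of_tendsto_fwdDiff {ψ : (Fin d → ℤ) → V}
    (h : ∀ i : Fin d, Tendsto (Δ_[Pi.single i 1] ψ) cofinite (𝓝 0)) :
    ψ =o[cofinite] fun z => bracket z := by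
  refine Asymptotics.isLittleO_iff.2 fun ε hε => ?_
  have hB : 0 < ε / (2 * (d + 1)) := by positivity
  obtain ⟨R, hR⟩ := exists_forall_pathLength_ge <| eventually_all.2 fun i =>
    (h i).norm.eventually (ge_mem_nhds (by simpa using hB))
  obtain ⟨K, hK⟩ : ∃ K, ∀ m : Fin d → ℤ, pathLength m ≤ R → ‖ψ m‖ ≤ K := by
    obtain ⟨K, hK⟩ := ((finite_pathLength_le (d := d) R).image fun m => ‖ψ m‖).bddAbove
    exact ⟨K, fun m hm => hK ⟨m, hm, rfl⟩⟩
  filter_upwards [tendsto_bracket_cofinite.eventually_ge_atTop (2 * K / ε)] with m hm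
  have hpath := norm_le_pathLength_mul_add (r := ‖m‖) hB.le hK (fun z hz _ => hR z hz) le_rfl
  have hmK : K ≤ ε / 2 * bracket m := by
    rw [div_le_iff₀ hε] at hm; linarith
  rw [Real.norm_of_nonneg (bracket_pos m).le]
  calc ‖ψ m‖ ≤ (d * ‖m‖) * (ε / (2 * (d + 1))) + K :=
        hpath.trans (by gcongr; exact pathLength_le m)
    _ ≤ ((d + 1) * bracket m) * (ε / (2 * (d + 1))) + ε / 2 * bracket m := by
        gcongr
        · linarith
        · exact le_add_of_nonneg_right zero_le_two
    _ = ε * bracket m := by field_simp; ring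

end Paths

/-! ### Fluxes decaying at infinity -/

section Flux

variable {d : ℕ}

lemma sum_bracket_rpow_one_sub_dim_le (hd : 1 ≤ d) (n : ℕ) :
    ∑ z ∈ Finset.Icc (-(n : Fin d → ℤ)) n, bracket z ^ (1 - (d : ℝ)) ≤
      (d + 1) * 2 ^ d * (n + 1) := by
  have hsub : (Finset.Icc (-(n : Fin d → ℤ)) n).image (⌊‖·‖⌋₊) ⊆ Finset.range (n + 1) :=
    Finset.image_subset_iff.2 fun z hz => Finset.mem_range_succ_iff.2
      (Nat.floor_le_of_le ((mem_Icc_neg_iff_norm_le n z).1 hz))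
  have hcard := Finset.card_le_card hsub
  rw [Finset.card_range] at hcard
  have h := sum_bracket_rpow_le hd 1 (Finset.Icc (-(n : Fin d → ℤ)) n)
  simp only [neg_add_cancel, Real.rpow_zero, Finset.sum_const, nsmul_one] at h
  simp only [neg_add_eq_sub] at h
  refine h.trans ?_
  gcongr
  exact_mod_cast hcard

lemma isLittleO_sum_Icc_abs (hd : 1 ≤ d) {h : (Fin d → ℤ) → ℝ}
    (hh : h =o[cofinite] fun z => bracket z ^ (1 - (d : ℝ))) :
    (fun n : ℕ => ∑ z ∈ Finset.Icc (-(n : Fin d → ℤ)) n, |h z|) =o[atTop]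
      fun n => (n + 1 : ℝ) := by
  refine Asymptotics.isLittleO_iff.2 fun ε hε => ?_
  set K : ℝ := (d + 1) * 2 ^ d
  have hK₀ : 0 < K := by positivity
  have hfin : {z | ¬ ‖h z‖ ≤ ε / (2 * K) * ‖bracket z ^ (1 - (d : ℝ))‖}.Finite :=
    eventually_cofinite.1 (Asymptotics.isLittleO_iff.1 hh (by positivity))
  have hpt (z : Fin d → ℤ) : |h z| ≤ (if z ∈ hfin.toFinset then |h z| else 0) +
      ε / (2 * K) * bracket z ^ (1 - (d : ℝ)) := by
    have hpos : 0 ≤ bracket z ^ (1 - (d : ℝ)) := Real.rpow_nonneg (bracket_pos z).le _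
    split_ifs with hz
    · exact le_add_of_nonneg_right (by positivity)
    · rw [hfin.mem_toFinset, Set.mem_ofPred_eq, not_not, Real.norm_of_nonneg hpos] at hz
      rwa [zero_add]
  set B := ∑ z ∈ hfin.toFinset, |h z|
  filter_upwards [eventually_ge_atTop ⌈2 * B / ε⌉₊] with n hn
  have hBn : B ≤ ε / 2 * (n + 1) := by
    have hn' := Nat.ceil_le.1 hn
    rw [div_le_iff₀ hε] at hn'
    linarith
  rw [Real.norm_of_nonneg (Finset.sum_nonneg fun _ _ => abs_nonneg _),
    Real.norm_of_nonneg (by positivity)]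
  calc ∑ z ∈ Finset.Icc (-(n : Fin d → ℤ)) n, |h z|
      ≤ B + ε / (2 * K) * ∑ z ∈ Finset.Icc (-(n : Fin d → ℤ)) n, bracket z ^ (1 - (d : ℝ)) := by
        refine (Finset.sum_le_sum fun z _ => hpt z).trans ?_
        rw [Finset.sum_add_distrib, Finset.mul_sum, Finset.sum_ite_mem]
        gcongr
        exact Finset.sum_le_sum_of_subset_of_nonneg Finset.inter_subset_right
          fun _ _ _ => abs_nonneg _
    _ ≤ ε / 2 * (n + 1) + ε / (2 * K) * (K * (n + 1)) := by
        gcongr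
        exact sum_bracket_rpow_one_sub_dim_le hd n
    _ = ε * (n + 1) := by field_simp; ring

/-- The cutoff `(1 - ‖z‖ / (n + 1))₊`; its slope is `1 / (n + 1)` and it exhausts the lattice. -/
def tent (n : ℕ) (z : Fin d → ℤ) : ℝ := max 0 (1 - ‖z‖ / (n + 1))

lemma abs_tent_le_one (n : ℕ) (z : Fin d → ℤ) : |tent n z| ≤ 1 := by
  rw [tent, abs_of_nonneg (le_max_left _ _)]
  exact max_le zero_le_one (sub_le_self _ (by positivity))

lemma tent_eq_zero {n : ℕ} {z : Fin d → ℤ} (hz : (n + 1 : ℝ) ≤ ‖z‖) : tent n z = 0 :=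
  max_eq_left (sub_nonpos.2 ((one_le_div (by positivity)).2 hz))

lemma tendsto_tent (z : Fin d → ℤ) : Tendsto (fun n => tent n z) atTop (𝓝 1) := by
  have h : Tendsto (fun n : ℕ => ‖z‖ / ((n : ℝ) + 1)) atTop (𝓝 0) :=
    tendsto_const_nhds.div_atTop
      (tendsto_atTop_add_const_right _ _ tendsto_natCast_atTop_atTop)
  simpa [tent] using (tendsto_const_nhds (x := (0 : ℝ))).max (h.const_sub 1)

lemma abs_tent_sub_tent_le (n : ℕ) (z w : Fin d → ℤ) :
    |tent n z - tent n w| ≤ ‖z - w‖ / (n + 1) := by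
  refine (abs_max_sub_max_le_max _ _ _ _).trans (max_le ?_ ?_)
  · rw [sub_self, abs_zero]
    positivity
  rw [sub_sub_sub_cancel_left, ← sub_div, abs_div, abs_of_pos (by positivity : (0 : ℝ) < n + 1),
    abs_sub_comm]
  gcongr
  exact abs_norm_sub_norm_le z w

lemma tent_sub_eq_zero {n k : ℕ} {a z : Fin d → ℤ} (ha : ‖a‖ ≤ k)
    (hz : z ∉ Finset.Icc (-((n + 1 + k : ℕ) : Fin d → ℤ)) (n + 1 + k : ℕ)) :
    tent n (z - a) = 0 := by
  rw [mem_Icc_neg_iff_norm_le, not_le] at hz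
  push_cast at hz
  exact tent_eq_zero (by linarith [norm_le_norm_sub_add z a])

lemma summable_tent_sub_mul (n : ℕ) (a : Fin d → ℤ) (φ : (Fin d → ℤ) → ℝ) :
    Summable fun z => tent n (z - a) * φ z := by
  obtain ⟨k, hk⟩ := exists_natCast_eq_norm a
  exact summable_of_ne_finset_zero fun z hz => by rw [tent_sub_eq_zero hk.ge hz, zero_mul]

lemma tsum_tent_mul_fwdDiff (n : ℕ) (a : Fin d → ℤ) (h : (Fin d → ℤ) → ℝ) :
    ∑' z, tent n z * (Δ_[a] h) z = ∑' z, (tent n (z - a) - tent n z) * h z := by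
  have hshift : Summable fun z => tent n z * h (z + a) := by
    simpa using summable_tent_sub_mul n 0 fun z => h (z + a)
  have hself : Summable fun z => tent n z * h z := by
    simpa using summable_tent_sub_mul n 0 h
  simp only [fwdDiff, mul_sub, sub_mul]
  rw [hshift.tsum_sub hself, (summable_tent_sub_mul n a h).tsum_sub hself,
    ← (Equiv.addRight a).tsum_eq fun z => tent n (z - a) * h z]
  simp only [Equiv.coe_addRight, add_sub_cancel_right]

lemma abs_tsum_tent_mul_fwdDiff_le {k : ℕ} (n : ℕ) {a : Fin d → ℤ} (ha : ‖a‖ ≤ k)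
    (h : (Fin d → ℤ) → ℝ) :
    |∑' z, tent n z * (Δ_[a] h) z| ≤
      ‖a‖ / (n + 1) * ∑ z ∈ Finset.Icc (-((n + 1 + k : ℕ) : Fin d → ℤ)) (n + 1 + k : ℕ), |h z| := by
  rw [tsum_tent_mul_fwdDiff, tsum_eq_sum (s := Finset.Icc (-((n + 1 + k : ℕ) : Fin d → ℤ))
    (n + 1 + k : ℕ)), Finset.mul_sum]
  · refine (Finset.abs_sum_le_sum_abs _ _).trans (Finset.sum_le_sum fun z _ => ?_)
    rw [abs_mul]
    gcongr
    simpa using abs_tent_sub_tent_le n (z - a) z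
  · intro z hz
    have hz₀ := tent_sub_eq_zero (a := 0) (by simp) hz
    rw [sub_zero] at hz₀
    rw [tent_sub_eq_zero ha hz, hz₀, sub_zero, zero_mul]

lemma tendsto_tsum_tent_mul_fwdDiff (hd : 1 ≤ d) (a : Fin d → ℤ) {h : (Fin d → ℤ) → ℝ}
    (hh : h =o[cofinite] fun z => bracket z ^ (1 - (d : ℝ))) :
    Tendsto (fun n => ∑' z, tent n z * (Δ_[a] h) z) atTop (𝓝 0) := by
  obtain ⟨k, hk⟩ := exists_natCast_eq_norm a
  have hshift : Tendsto (fun n : ℕ => n + 1 + k) atTop atTop :=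
    tendsto_atTop_mono (fun n => by simp only [id]; omega) tendsto_id
  have hradius : (fun n : ℕ => ((n + 1 + k : ℕ) + 1 : ℝ)) =O[atTop] fun n => (n + 1 : ℝ) := by
    refine Asymptotics.IsBigO.of_bound (k + 2) (Eventually.of_forall fun n => ?_)
    rw [Real.norm_of_nonneg (by positivity), Real.norm_of_nonneg (by positivity)]
    push_cast
    nlinarith [Nat.cast_nonneg (α := ℝ) n, Nat.cast_nonneg (α := ℝ) k]
  have hsum := (((isLittleO_sum_Icc_abs hd hh).comp_tendsto hshift).trans_isBigO
    hradius).tendsto_div_nhds_zero.const_mul ‖a‖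
  rw [mul_zero] at hsum
  refine squeeze_zero_norm (fun n => ?_) hsum
  exact (abs_tsum_tent_mul_fwdDiff_le n hk.ge h).trans_eq (by simp only [Function.comp]; ring)

lemma tsum_eq_zero_of_sum_fwdDiff (hd : 1 ≤ d) {ι : Type*} (s : Finset ι)
    (a : ι → Fin d → ℤ) (h : ι → (Fin d → ℤ) → ℝ)
    (hh : ∀ i ∈ s, h i =o[cofinite] fun z => bracket z ^ (1 - (d : ℝ)))
    (hS : Summable fun z => ∑ i ∈ s, (Δ_[a i] (h i)) z) :
    ∑' z, ∑ i ∈ s, (Δ_[a i] (h i)) z = 0 := by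
  have hcutoff : Tendsto (fun n => ∑' z, tent n z * ∑ i ∈ s, (Δ_[a i] (h i)) z) atTop
      (𝓝 (∑' z, ∑ i ∈ s, (Δ_[a i] (h i)) z)) := by
    refine tendsto_tsum_of_dominated_convergence hS.abs (fun z => ?_)
      (Eventually.of_forall fun n z => ?_)
    · simpa using (tendsto_tent z).mul_const (∑ i ∈ s, (Δ_[a i] (h i)) z)
    · rw [norm_mul, Real.norm_eq_abs, Real.norm_eq_abs]
      exact mul_le_of_le_one_left (abs_nonneg _) (abs_tent_le_one n z)
  refine tendsto_nhds_unique hcutoff ?_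
  have hsplit (n : ℕ) : ∑' z, tent n z * ∑ i ∈ s, (Δ_[a i] (h i)) z =
      ∑ i ∈ s, ∑' z, tent n z * (Δ_[a i] (h i)) z := by
    simp_rw [Finset.mul_sum]
    exact Summable.tsum_finsetSum fun i _ => by
      simpa using summable_tent_sub_mul n 0 (Δ_[a i] (h i))
  simp_rw [hsplit]
  simpa using tendsto_finsetSum s fun i hi => tendsto_tsum_tent_mul_fwdDiff hd (a i) (hh i hi)

end Flux

/-! ### Polynomials and Taylor expansion on the integer lattice -/

section Polynomials

variable {d : ℕ}

/-- The monomial `∏ z i` over the multiset `s` of coordinates. -/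
def latticeMonomial (s : Multiset (Fin d)) (z : Fin d → ℤ) : ℝ := (s.map fun i => (z i : ℝ)).prod

/-- The restrictions to `ℤ^d` of the polynomials of degree less than `q`. -/
def polySubmodule (d q : ℕ) : Submodule ℝ ((Fin d → ℤ) → ℝ) :=
  Submodule.span ℝ (latticeMonomial '' {s | s.card < q})

lemma latticeMonomial_mem {s : Multiset (Fin d)} {q : ℕ} (hs : s.card < q) :
    latticeMonomial s ∈ polySubmodule d q :=
  Submodule.subset_span ⟨s, hs, rfl⟩

lemma latticeMonomial_cons (i : Fin d) (s : Multiset (Fin d)) :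
    latticeMonomial (i ::ₘ s) = fun z => (z i : ℝ) * latticeMonomial s z := by
  funext z
  simp only [latticeMonomial, Multiset.map_cons, Multiset.prod_cons]

lemma polySubmodule_mono {q r : ℕ} (hqr : q ≤ r) : polySubmodule d q ≤ polySubmodule d r :=
  Submodule.span_mono (Set.image_mono fun _ hs => hs.trans_le hqr)

lemma latticeMonomial_zero : latticeMonomial (0 : Multiset (Fin d)) = fun _ => 1 := rfl

lemma one_mem_polySubmodule : (fun _ => 1 : (Fin d → ℤ) → ℝ) ∈ polySubmodule d 1 :=
  latticeMonomial_mem (s := 0) zero_lt_one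

lemma map_mem_polySubmodule {q r : ℕ} (T : ((Fin d → ℤ) → ℝ) →ₗ[ℝ] ((Fin d → ℤ) → ℝ))
    (hT : ∀ s : Multiset (Fin d), s.card < q → T (latticeMonomial s) ∈ polySubmodule d r)
    {φ : (Fin d → ℤ) → ℝ} (hφ : φ ∈ polySubmodule d q) : T φ ∈ polySubmodule d r := by
  have hle : (polySubmodule d q).map T ≤ polySubmodule d r := by
    rw [polySubmodule, Submodule.map_span_le]
    rintro _ ⟨s, hs, rfl⟩
    exact hT s hs
  exact hle ⟨φ, hφ, rfl⟩

lemma coord_mul_mem_polySubmodule {q : ℕ} (i : Fin d) {φ : (Fin d → ℤ) → ℝ}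
    (hφ : φ ∈ polySubmodule d q) : (fun z => (z i : ℝ) * φ z) ∈ polySubmodule d (q + 1) := by
  refine map_mem_polySubmodule (LinearMap.mulLeft ℝ fun z => (z i : ℝ)) (fun s hs => ?_) hφ
  have hT : LinearMap.mulLeft ℝ (fun z => (z i : ℝ)) (latticeMonomial s) =
      latticeMonomial (i ::ₘ s) := (latticeMonomial_cons i s).symm
  rw [hT]
  exact latticeMonomial_mem (by simpa using hs)

lemma comp_add_mem_polySubmodule {q : ℕ} {φ : (Fin d → ℤ) → ℝ} (hφ : φ ∈ polySubmodule d q)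
    (a : Fin d → ℤ) : (fun z => φ (z + a)) ∈ polySubmodule d q := by
  have hmonomial (s : Multiset (Fin d)) :
      (fun z => latticeMonomial s (z + a)) ∈ polySubmodule d (s.card + 1) := by
    induction s using Multiset.induction with
    | empty => exact one_mem_polySubmodule
    | cons i s ih =>
      have hcons : (fun z => latticeMonomial (i ::ₘ s) (z + a)) =
          (fun z => (z i : ℝ) * latticeMonomial s (z + a)) +
            (a i : ℝ) • fun z => latticeMonomial s (z + a) := by
        funext z
        simp [latticeMonomial_cons, add_mul]
      rw [hcons, Multiset.card_cons]
      exact add_mem (coord_mul_mem_polySubmodule i ih)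
        (Submodule.smul_mem _ _ (polySubmodule_mono (Nat.le_succ _) ih))
  exact map_mem_polySubmodule (LinearMap.funLeft ℝ ℝ (· + a))
    (fun s hs => polySubmodule_mono hs (hmonomial s)) hφ

lemma fwdDiff_mem_polySubmodule {q : ℕ} {φ : (Fin d → ℤ) → ℝ}
    (hφ : φ ∈ polySubmodule d (q + 1)) (a : Fin d → ℤ) : Δ_[a] φ ∈ polySubmodule d q := by
  have hmonomial (s : Multiset (Fin d)) : Δ_[a] (latticeMonomial s) ∈ polySubmodule d s.card := by
    induction s using Multiset.induction with
    | empty =>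
      rw [latticeMonomial_zero, fwdDiff_const]
      exact zero_mem _
    | cons i s ih =>
      have hΔ : Δ_[a] (latticeMonomial (i ::ₘ s)) =
          (fun z => (z i : ℝ) * (Δ_[a] (latticeMonomial s)) z) +
            (a i : ℝ) • fun z => latticeMonomial s (z + a) := by
        funext z
        simp [fwdDiff, latticeMonomial_cons]
        ring
      rw [hΔ, Multiset.card_cons]
      exact add_mem (coord_mul_mem_polySubmodule i ih) (Submodule.smul_mem _ _
        (comp_add_mem_polySubmodule (latticeMonomial_mem (Nat.lt_succ_self _)) a))
  exact map_mem_polySubmodule (LinearMap.funLeft ℝ ℝ (· + a) - LinearMap.id)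
    (fun s hs => polySubmodule_mono (Nat.lt_succ_iff.1 hs) (hmonomial s)) hφ

lemma abs_latticeMonomial_le (s : Multiset (Fin d)) (z : Fin d → ℤ) :
    |latticeMonomial s z| ≤ bracket z ^ s.card := by
  induction s using Multiset.induction with
  | empty => simp [latticeMonomial]
  | cons i s ih =>
    rw [latticeMonomial_cons, abs_mul, Multiset.card_cons, pow_succ']
    gcongr
    · exact (bracket_pos z).le
    · rw [← Int.norm_eq_abs]
      exact (norm_le_pi_norm z i).trans (le_add_of_nonneg_right zero_le_two)

lemma hasDecay_of_mem_polySubmodule {q : ℕ} {φ : (Fin d → ℤ) → ℝ}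
    (hφ : φ ∈ polySubmodule d q) : HasDecay ((q : ℝ) - 1) 0 φ := by
  induction hφ using Submodule.span_induction with
  | mem _ hmem =>
    obtain ⟨s, hs, rfl⟩ := hmem
    have hs' : (s.card : ℝ) + 1 ≤ q := by exact_mod_cast hs
    refine HasDecay.mono (e := s.card) (by linarith) (.of_bound 1 fun z => ?_)
    rw [one_mul, logWeight_zero_right, Real.rpow_natCast]
    exact abs_latticeMonomial_le s z
  | zero => exact Asymptotics.isBigO_zero _ _
  | add _ _ _ _ h h' => exact Asymptotics.IsBigO.add h h'
  | smul c _ _ h => exact Asymptotics.IsBigO.const_smul_left h c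

lemma choose_coord_mul_mem_polySubmodule {q : ℕ} (i : Fin d) (k : ℕ) {φ : (Fin d → ℤ) → ℝ}
    (hφ : φ ∈ polySubmodule d q) :
    (fun z => Ring.choose (z i : ℝ) k * φ z) ∈ polySubmodule d (q + k) := by
  induction k with
  | zero => simpa [Ring.choose_zero_right] using hφ
  | succ k ih =>
    have hrec (x : ℝ) : Ring.choose x (k + 1) = (k + 1 : ℝ)⁻¹ * ((x - k) * Ring.choose x k) := by
      have h := Ring.choose_smul_choose x (Nat.le_succ k)
      rw [Nat.choose_succ_self_right, Nat.succ_eq_add_one, Nat.add_sub_cancel_left,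
        Ring.choose_one_right, nsmul_eq_mul] at h
      push_cast at h
      field_simp
      linarith
    have hsplit : (fun z : Fin d → ℤ => Ring.choose (z i : ℝ) (k + 1) * φ z) =
        (k + 1 : ℝ)⁻¹ • ((fun z => (z i : ℝ) * (Ring.choose (z i : ℝ) k * φ z)) -
          (k : ℝ) • fun z => Ring.choose (z i : ℝ) k * φ z) := by
      funext z
      simp only [hrec, Pi.smul_apply, Pi.sub_apply, smul_eq_mul]
      ring
    rw [hsplit]
    exact Submodule.smul_mem _ _ (sub_mem (coord_mul_mem_polySubmodule i ih)
      (Submodule.smul_mem _ _ (polySubmodule_mono (Nat.le_succ _) ih)))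

/-- The multivariate binomial coefficient `∏ i, (z i).choose (s.count i)`, the discrete analogue of
the Taylor monomial with multi-index `s`. -/
def latticeBinomial (s : Multiset (Fin d)) (z : Fin d → ℤ) : ℝ :=
  ∏ i, Ring.choose (z i : ℝ) (s.count i)

lemma latticeBinomial_mem (s : Multiset (Fin d)) :
    latticeBinomial s ∈ polySubmodule d (s.card + 1) := by
  have hprod (T : Finset (Fin d)) : (fun z => ∏ i ∈ T, Ring.choose (z i : ℝ) (s.count i)) ∈
      polySubmodule d (1 + ∑ i ∈ T, s.count i) := by
    induction T using Finset.induction with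
    | empty => simpa using one_mem_polySubmodule
    | insert i T hi ih =>
      simp only [Finset.prod_insert hi, Finset.sum_insert hi]
      rw [add_comm (s.count i), ← add_assoc]
      exact choose_coord_mul_mem_polySubmodule i _ ih
  have h := hprod Finset.univ
  rwa [Multiset.sum_count_eq_card fun i _ => Finset.mem_univ i, add_comm] at h

lemma latticeBinomial_zero_left : latticeBinomial (0 : Multiset (Fin d)) = fun _ => 1 := by
  funext z
  simp [latticeBinomial]

lemma latticeBinomial_apply_zero {s : Multiset (Fin d)} (hs : s ≠ 0) : latticeBinomial s 0 = 0 := by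
  obtain ⟨i, hi⟩ := Multiset.exists_mem_of_ne_zero hs
  refine Finset.prod_eq_zero (Finset.mem_univ i) ?_
  simpa using Ring.choose_zero_pos ℝ (Multiset.count_pos.2 hi)

lemma fwdDiff_latticeBinomial_cons (i : Fin d) (s : Multiset (Fin d)) :
    Δ_[Pi.single i 1] (latticeBinomial (i ::ₘ s)) = latticeBinomial s := by
  have hrest (z : Fin d → ℤ) (k : ℤ) :
      ∏ j ∈ Finset.univ.erase i, Ring.choose ((z + Pi.single i k : Fin d → ℤ) j : ℝ)
        ((i ::ₘ s).count j) = ∏ j ∈ Finset.univ.erase i, Ring.choose (z j : ℝ) (s.count j) :=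
    Finset.prod_congr rfl fun j hj => by
      rw [Multiset.count_cons_of_ne (Finset.ne_of_mem_erase hj), Pi.add_apply,
        Pi.single_eq_of_ne (Finset.ne_of_mem_erase hj), add_zero]
  funext z
  have hz := hrest z 0
  rw [Pi.single_zero, add_zero] at hz
  simp only [fwdDiff, latticeBinomial, ← Finset.mul_prod_erase _ _ (Finset.mem_univ i), hrest, hz]
  rw [← sub_mul, Multiset.count_cons_self, Pi.add_apply, Pi.single_eq_same, Int.cast_add,
    Int.cast_one, Ring.choose_succ_succ, add_sub_cancel_right]

lemma fwdDiff_latticeBinomial_of_notMem {i : Fin d} {s : Multiset (Fin d)} (hi : i ∉ s) :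
    Δ_[Pi.single i 1] (latticeBinomial s) = 0 := by
  funext z
  refine sub_eq_zero.2 (Finset.prod_congr rfl fun j _ => ?_)
  rcases eq_or_ne j i with rfl | hj
  · rw [Multiset.count_eq_zero.2 hi, Ring.choose_zero_right, Ring.choose_zero_right]
  · rw [Pi.add_apply, Pi.single_eq_of_ne hj, add_zero]

lemma sum_sym_succ_eq_sum_cons {M : Type*} [AddCommMonoid M] {n : ℕ} (i : Fin d)
    {g : Sym (Fin d) (n + 1) → M} (hg : ∀ s, i ∉ s → g s = 0) : ∑ s, g s = ∑ t, g (i ::ₛ t) := by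
  refine (Finset.sum_of_injOn (i ::ₛ ·) (fun t _ t' _ => (Sym.cons_inj_right i t t').1)
    (fun _ _ => Finset.mem_coe.2 (Finset.mem_univ _)) (fun s _ hs => hg s fun hi => hs ?_)
    fun _ _ => rfl).symm
  exact ⟨s.erase i hi, Finset.mem_coe.2 (Finset.mem_univ _), Sym.cons_erase hi⟩

/-- The steps `e_i`, for `i` in the multiset `s` of coordinates. -/
def unitSteps (s : Multiset (Fin d)) : Multiset (Fin d → ℤ) := s.map fun i => Pi.single i 1

/-- The discrete Taylor polynomial of degree less than `q` at the origin (Newton's forward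
difference formula). -/
def taylor (q : ℕ) (φ : (Fin d → ℤ) → ℝ) : (Fin d → ℤ) → ℝ :=
  ∑ n ∈ Finset.range q, ∑ s : Sym (Fin d) n, fwdDiffs (unitSteps s) φ 0 • latticeBinomial s

lemma taylor_mem_polySubmodule (q : ℕ) (φ : (Fin d → ℤ) → ℝ) :
    taylor q φ ∈ polySubmodule d q := by
  refine Submodule.sum_mem _ fun n hn => Submodule.sum_mem _ fun s _ => Submodule.smul_mem _ _ ?_
  have hs := latticeBinomial_mem (s : Multiset (Fin d))
  rw [s.card_coe] at hs
  exact polySubmodule_mono (Finset.mem_range.1 hn) hs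

lemma taylor_succ_eq_const_add (q : ℕ) (φ : (Fin d → ℤ) → ℝ) :
    taylor (q + 1) φ = (fun _ => φ 0) + ∑ n ∈ Finset.range q, ∑ s : Sym (Fin d) (n + 1),
      fwdDiffs (unitSteps s) φ 0 • latticeBinomial s := by
  rw [taylor, Finset.sum_range_succ', add_comm, Fintype.sum_unique]
  congr 1
  have hdefault : ((default : Sym (Fin d) 0) : Multiset (Fin d)) = 0 := rfl
  funext z
  simp [hdefault, latticeBinomial_zero_left, unitSteps]

lemma taylor_succ_apply_zero (q : ℕ) (φ : (Fin d → ℤ) → ℝ) : taylor (q + 1) φ 0 = φ 0 := by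
  have hs (n : ℕ) (s : Sym (Fin d) (n + 1)) : latticeBinomial (s : Multiset (Fin d)) 0 = 0 :=
    latticeBinomial_apply_zero (Multiset.card_pos.1 (s.card_coe.symm ▸ Nat.succ_pos n))
  simp [taylor_succ_eq_const_add, Finset.sum_apply, hs]

lemma fwdDiff_taylor_succ (q : ℕ) (φ : (Fin d → ℤ) → ℝ) (i : Fin d) :
    Δ_[Pi.single i 1] (taylor (q + 1) φ) = taylor q (Δ_[Pi.single i 1] φ) := by
  rw [taylor_succ_eq_const_add, fwdDiff_add, fwdDiff_const, taylor]
  simp only [fwdDiff_finsetSum, fwdDiff_const_smul]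
  refine (zero_add _).trans (Finset.sum_congr rfl fun n _ => ?_)
  rw [sum_sym_succ_eq_sum_cons i fun s hi => by
    rw [fwdDiff_latticeBinomial_of_notMem (mt Sym.mem_coe.1 hi), smul_zero]]
  refine Finset.sum_congr rfl fun t _ => ?_
  rw [Sym.coe_cons, fwdDiff_latticeBinomial_cons, fwdDiffs_fwdDiff, unitSteps, Multiset.map_cons,
    fwdDiffs_cons, unitSteps]

lemma abs_sub_taylor_le {q : ℕ} {φ : (Fin d → ℤ) → ℝ} {r B : ℝ} (hB : 0 ≤ B) (hr : 0 ≤ r)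
    (h : ∀ s : Multiset (Fin d), s.card = q → ∀ z, ‖z‖ ≤ r → |fwdDiffs (unitSteps s) φ z| ≤ B)
    {m : Fin d → ℤ} (hm : ‖m‖ ≤ r) : |φ m - taylor q φ m| ≤ (d * r) ^ q * B := by
  induction q generalizing φ m with
  | zero => simpa [taylor, unitSteps] using h 0 rfl m hm
  | succ q ih =>
    have hstep : ∀ z, ‖z‖ ≤ r → ∀ i, ‖(Δ_[Pi.single i 1] (φ - taylor (q + 1) φ)) z‖ ≤
        (d * r) ^ q * B := fun z hz i => by
      have hΔ : Δ_[Pi.single i 1] (φ - taylor (q + 1) φ) =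
          Δ_[Pi.single i 1] φ - taylor q (Δ_[Pi.single i 1] φ) :=
        fwdDiff_taylor_succ q φ i ▸ funext fun _ => sub_sub_sub_comm ..
      rw [hΔ]
      refine ih (fun s hs => ?_) hz
      have hcons := h (i ::ₘ s) (by rw [Multiset.card_cons, hs])
      rwa [unitSteps, Multiset.map_cons, fwdDiffs_cons, ← fwdDiffs_fwdDiff] at hcons
    have h₀ : (φ - taylor (q + 1) φ) 0 = 0 := by
      rw [Pi.sub_apply, taylor_succ_apply_zero, sub_self]
    calc |φ m - taylor (q + 1) φ m| ≤ d * ‖m‖ * ((d * r) ^ q * B) :=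
          norm_le_dim_mul_norm_mul (by positivity) h₀ hstep hm
      _ ≤ d * r * ((d * r) ^ q * B) := by gcongr
      _ = (d * r) ^ (q + 1) * B := by ring

end Polynomials

/-! ### Vanishing moments -/

section VanishingMoments

variable {d : ℕ}

/-- All moments of `f` of order less than `q` exist and vanish, i.e. `f` is orthogonal to the
polynomials of degree less than `q`. -/
def Annihilates (q : ℕ) (f : (Fin d → ℤ) → ℝ) : Prop :=
  ∀ φ ∈ polySubmodule d q, HasSum (fun z => f z * φ z) 0

lemma annihilates_of_latticeMonomial {q : ℕ} {f : (Fin d → ℤ) → ℝ}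
    (h : ∀ s : Multiset (Fin d), s.card < q → HasSum (fun z => f z * latticeMonomial s z) 0) :
    Annihilates q f := fun φ hφ => by
  induction hφ using Submodule.span_induction with
  | mem _ hmem =>
    obtain ⟨s, hs, rfl⟩ := hmem
    exact h s hs
  | zero => simp
  | add φ ψ _ _ hφ hψ => simpa [mul_add] using hφ.add hψ
  | smul c φ _ hφ => simpa [mul_left_comm] using hφ.mul_left c

lemma HasDecay.summable_mul_of_mem_polySubmodule (hd : 1 ≤ d) {q α : ℕ}
    {f φ : (Fin d → ℤ) → ℝ} (hf : HasDecay (-(d : ℝ) - q) α f) (hφ : φ ∈ polySubmodule d q) :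
    Summable fun z => f z * φ z :=
  (hf.mul (hasDecay_of_mem_polySubmodule hφ)).summable hd (by linarith)

/-- Summation by parts: `Δ_a f · φ + f · Δ_a φ(· - a)` is the divergence of a flux which is
`o(⟨z⟩ ^ (1 - d))`, and `Δ_a φ(· - a)` has lower degree than `φ`. -/
lemma Annihilates.fwdDiff (hd : 1 ≤ d) {q α : ℕ} {f : (Fin d → ℤ) → ℝ} {a : Fin d → ℤ}
    (hf : HasDecay (-(d : ℝ) - q) α f) (hΔf : HasDecay (-(d : ℝ) - (q + 1 : ℕ)) α (Δ_[a] f))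
    (h : Annihilates q f) : Annihilates (q + 1) (Δ_[a] f) := fun φ hφ => by
  have hΔfφ := hΔf.summable_mul_of_mem_polySubmodule hd hφ
  set ψ : (Fin d → ℤ) → ℝ := fun z => φ (z + -a) with hψ_def
  have hψ : ψ ∈ polySubmodule d (q + 1) := comp_add_mem_polySubmodule hφ (-a)
  have hfΔψ := h _ (fwdDiff_mem_polySubmodule hψ a)
  have hparts : ∀ z, (Δ_[a] fun z => f z * ψ z) z = (Δ_[a] f) z * φ z + f z * (Δ_[a] ψ) z :=
    fun z => by simp only [_root_.fwdDiff, hψ_def, add_neg_cancel_right]; ring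
  have hflux : (fun z => f z * ψ z) =o[cofinite] fun z => bracket z ^ (1 - (d : ℝ)) :=
    (hf.mul (hasDecay_of_mem_polySubmodule hψ)).isLittleO_rpow (by push_cast; linarith)
  have hzero := tsum_eq_zero_of_sum_fwdDiff hd {()} (fun _ => a) (fun _ z => f z * ψ z)
    (fun _ _ => hflux) (by simpa only [Finset.sum_singleton, hparts] using hΔfφ.add hfΔψ.summable)
  simp only [Finset.sum_singleton, hparts, hΔfφ.tsum_add hfΔψ.summable, hfΔψ.tsum_eq,
    add_zero] at hzero
  exact hzero ▸ hΔfφ.hasSum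

lemma Annihilates.fwdDiffs (hd : 1 ≤ d) {q α : ℕ} {f : (Fin d → ℤ) → ℝ}
    (s : Multiset (Fin d → ℤ))
    (hf : ∀ t : Multiset (Fin d → ℤ), t.card ≤ s.card →
      HasDecay (-(d : ℝ) - (q + t.card : ℕ)) α (fwdDiffs t f))
    (h : Annihilates q f) : Annihilates (q + s.card) (fwdDiffs s f) := by
  induction s using Multiset.induction with
  | empty => exact h
  | cons a s ih =>
    have hcard := Multiset.card_le_card (Multiset.le_cons_self s a)
    have hs := hf s hcard
    have has := hf (a ::ₘ s) le_rfl
    rw [Multiset.card_cons, ← add_assoc, fwdDiffs_cons] at has ⊢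
    exact (ih fun t ht => hf t (ht.trans hcard)).fwdDiff hd hs has

end VanishingMoments

/-! ### Convolution with a decaying kernel -/

section Convolution

open Asymptotics

variable {d : ℕ}

lemma isBigO_rpow_of_nonpos {X : Type*} {l : Filter X} {u v : X → ℝ} {K e : ℝ} (hK : 0 < K)
    (hv : ∀ x, 0 < v x) (he : e ≤ 0) (h : ∀ᶠ x in l, v x ≤ K * u x) :
    (fun x => u x ^ e) =O[l] fun x => v x ^ e := by
  refine .of_bound (K ^ (-e)) ?_
  filter_upwards [h] with x hx
  have hu : 0 < u x := pos_of_mul_pos_right ((hv x).trans_le hx) hK.le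
  have hle : (K * u x) ^ e ≤ v x ^ e := Real.rpow_le_rpow_of_nonpos (hv x) hx he
  rw [Real.norm_of_nonneg (by positivity), Real.norm_of_nonneg (by have := hv x; positivity)]
  calc u x ^ e = K ^ (-e) * (K * u x) ^ e := by
        rw [Real.mul_rpow hK.le hu.le, ← mul_assoc, ← Real.rpow_add hK, neg_add_cancel,
          Real.rpow_zero, one_mul]
    _ ≤ K ^ (-e) * v x ^ e := by gcongr

/-- The sums of `|F (ℓ, m)|` over the points `m` with `(ℓ, m) ∈ S` are
`O(⟨ℓ⟩ ^ e (log ⟨ℓ⟩) ^ α)`. They are encoded by their finite partial sums, so that absolute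
convergence is part of the assertion. -/
def SumsDecay (e : ℝ) (α : ℕ) (S : Set ((Fin d → ℤ) × (Fin d → ℤ)))
    (F : (Fin d → ℤ) × (Fin d → ℤ) → ℝ) : Prop :=
  ∃ C : ℝ, ∀ (ℓ : Fin d → ℤ) (T : Finset (Fin d → ℤ)), (∀ m ∈ T, (ℓ, m) ∈ S) →
    ∑ m ∈ T, |F (ℓ, m)| ≤ C * logWeight e α (bracket ℓ)

namespace SumsDecay

variable {e : ℝ} {α : ℕ} {S S' : Set ((Fin d → ℤ) × (Fin d → ℤ))}
  {F F' : (Fin d → ℤ) × (Fin d → ℤ) → ℝ}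

lemma of_isBigO (hS : S ⊆ S') (hF : F =O[𝓟 S] F') (h : SumsDecay e α S' F') :
    SumsDecay e α S F := by
  obtain ⟨c, hc, hF⟩ := hF.exists_nonneg
  obtain ⟨C, hC⟩ := h
  refine ⟨c * C, fun ℓ T hT => ?_⟩
  calc ∑ m ∈ T, |F (ℓ, m)| ≤ ∑ m ∈ T, c * |F' (ℓ, m)| :=
        Finset.sum_le_sum fun m hm => isBigOWith_principal.1 hF _ (hT m hm)
    _ ≤ c * C * logWeight e α (bracket ℓ) := by
        rw [← Finset.mul_sum, mul_assoc]
        exact mul_le_mul_of_nonneg_left (hC ℓ T fun m hm => hS (hT m hm)) hc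

lemma sub (h : SumsDecay e α S F) (h' : SumsDecay e α S F') :
    SumsDecay e α S fun x => F x - F' x := by
  obtain ⟨C, hC⟩ := h
  obtain ⟨C', hC'⟩ := h'
  refine ⟨C + C', fun ℓ T hT => ?_⟩
  calc ∑ m ∈ T, |F (ℓ, m) - F' (ℓ, m)| ≤ ∑ m ∈ T, (|F (ℓ, m)| + |F' (ℓ, m)|) :=
        Finset.sum_le_sum fun m _ => abs_sub _ _
    _ ≤ (C + C') * logWeight e α (bracket ℓ) := by
        rw [Finset.sum_add_distrib, add_mul]
        exact add_le_add (hC ℓ T hT) (hC' ℓ T hT)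

lemma of_subset_union {S₀ : Set ((Fin d → ℤ) × (Fin d → ℤ))} (hS₀ : S₀ ⊆ S ∪ S')
    (h : SumsDecay e α S F) (h' : SumsDecay e α S' F) : SumsDecay e α S₀ F := by
  classical
  obtain ⟨C, hC⟩ := h
  obtain ⟨C', hC'⟩ := h'
  refine ⟨C + C', fun ℓ T hT => ?_⟩
  rw [← Finset.sum_filter_add_sum_filter_not T fun m => (ℓ, m) ∈ S, add_mul]
  exact add_le_add (hC ℓ _ fun m hm => (Finset.mem_filter.1 hm).2)
    (hC' ℓ _ fun m hm => (hS₀ (hT m (Finset.mem_filter.1 hm).1)).resolve_left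
      (Finset.mem_filter.1 hm).2)

lemma summable (h : SumsDecay e α Set.univ F) (ℓ : Fin d → ℤ) : Summable fun m => F (ℓ, m) := by
  obtain ⟨C, hC⟩ := h
  have h := summable_of_sum_le (fun m => abs_nonneg (F (ℓ, m)))
    fun T => hC ℓ T fun m _ => Set.mem_univ (ℓ, m)
  exact h.of_abs

lemma hasDecay_tsum (h : SumsDecay e α Set.univ F) :
    HasDecay e α fun ℓ => ∑' m, F (ℓ, m) := by
  have hsum := h.summable
  obtain ⟨C, hC⟩ := h
  refine HasDecay.of_bound C fun ℓ => ?_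
  calc ‖∑' m, F (ℓ, m)‖ ≤ ∑' m, |F (ℓ, m)| := norm_tsum_le_tsum_norm (hsum ℓ).abs
    _ ≤ C * logWeight e α (bracket ℓ) :=
        (hsum ℓ).abs.tsum_le_of_sum_le fun T => hC ℓ T fun m _ => Set.mem_univ (ℓ, m)

end SumsDecay

lemma sumsDecay_near (hd : 1 ≤ d) (e : ℝ) (α : ℕ) :
    SumsDecay (d := d) e (α + 1) {x | ‖x.2‖ ≤ ‖x.1‖ / 2} fun x =>
      bracket x.1 ^ e * logWeight (-(d : ℝ)) α (bracket x.2) := by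
  obtain ⟨C, -, hC⟩ := exists_sum_logWeight_ball_le hd α
  refine ⟨C, fun ℓ T hT => ?_⟩
  have hball := hC (bracket ℓ) (two_le_bracket ℓ) T fun m hm => by
    have hm : ‖m‖ ≤ ‖ℓ‖ / 2 := hT m hm
    unfold bracket
    linarith [norm_nonneg ℓ]
  have hℓ : 0 ≤ bracket ℓ ^ e := Real.rpow_nonneg (bracket_pos ℓ).le e
  simp only [abs_mul, abs_of_nonneg hℓ, abs_of_pos (logWeight_bracket_pos _ _ _)]
  rw [← Finset.mul_sum, logWeight, mul_left_comm]
  exact mul_le_mul_of_nonneg_left hball hℓ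

lemma sumsDecay_far (hd : 1 ≤ d) (e : ℝ) (α : ℕ) {s : ℝ} (hs : 0 < s) :
    SumsDecay (d := d) (e - s) (α + 1) {x | ‖x.1‖ / 2 ≤ ‖x.2‖} fun x =>
      bracket x.1 ^ e * logWeight (-(d : ℝ) - s) α (bracket x.2) := by
  obtain ⟨C, hC₀, hC⟩ := exists_sum_logWeight_tail_le hd α hs
  obtain ⟨K, hK⟩ := exists_logWeight_le_of_comparable (-s) (α + 1) one_le_two
  refine ⟨C * (2 * K), fun ℓ T hT => ?_⟩
  have hX : 2 ≤ ‖ℓ‖ / 2 + 2 := by linarith [norm_nonneg ℓ]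
  have htail := hC _ hX T fun m hm => add_le_add_left (hT m hm) 2
  have hXℓ := (logWeight_le_two_mul_logWeight_succ (-s) α hX).trans <|
    mul_le_mul_of_nonneg_left (hK _ (bracket ℓ) hX (two_le_bracket ℓ)
      (by unfold bracket; linarith [norm_nonneg ℓ]) (by unfold bracket; linarith)) zero_le_two
  have hℓ : 0 ≤ bracket ℓ ^ e := Real.rpow_nonneg (bracket_pos ℓ).le e
  simp only [abs_mul, abs_of_nonneg hℓ, abs_of_pos (logWeight_bracket_pos _ _ _)]
  rw [← Finset.mul_sum, sub_eq_add_neg e s, ← rpow_mul_logWeight _ _ _ (bracket_pos ℓ),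
    mul_left_comm]
  refine mul_le_mul_of_nonneg_left (htail.trans ?_) hℓ
  rw [mul_assoc, mul_assoc]
  exact mul_le_mul_of_nonneg_left hXℓ hC₀

lemma exists_sum_bracket_sub_rpow_le (hd : 1 ≤ d) {b : ℝ} (hb : b ≤ d) :
    ∃ C : ℝ, ∀ (ℓ : Fin d → ℤ) (T : Finset (Fin d → ℤ)), (∀ m ∈ T, ‖m - ℓ‖ ≤ 2 * ‖ℓ‖) →
      ∑ m ∈ T, bracket (m - ℓ) ^ (-b) ≤ C * logWeight (d - b) 1 (bracket ℓ) := by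
  obtain ⟨C, hC₀, hC⟩ := exists_sum_logWeight_ball_le hd 0
  obtain ⟨K, hK⟩ := exists_logWeight_le_of_comparable (d - b) 1 one_le_two
  refine ⟨C * K, fun ℓ T hT => ?_⟩
  have hX : 2 ≤ 2 * bracket ℓ := by linarith [two_le_bracket ℓ]
  have hle : ∀ m ∈ T, bracket (m - ℓ) ≤ 2 * bracket ℓ := fun m hm => by
    unfold bracket
    linarith [hT m hm]
  have hball := hC _ hX (T.map (Equiv.subRight ℓ).toEmbedding) <|
    Finset.forall_mem_map.2 fun m hm => hle m hm
  simp only [Finset.sum_map, Equiv.coe_toEmbedding, Equiv.subRight_apply, logWeight_zero_right,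
    zero_add, pow_one] at hball
  calc ∑ m ∈ T, bracket (m - ℓ) ^ (-b)
      ≤ ∑ m ∈ T, (2 * bracket ℓ) ^ (d - b) * bracket (m - ℓ) ^ (-(d : ℝ)) :=
        Finset.sum_le_sum fun m hm => by
          have hpos := bracket_pos (m - ℓ)
          rw [show -b = d - b + -(d : ℝ) by ring, Real.rpow_add hpos]
          gcongr
          exact hle m hm
    _ ≤ (2 * bracket ℓ) ^ (d - b) * (C * Real.log (2 * bracket ℓ)) := by
        rw [← Finset.mul_sum]
        gcongr
    _ = C * logWeight (d - b) 1 (2 * bracket ℓ) := by rw [logWeight, pow_one]; ring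
    _ ≤ C * K * logWeight (d - b) 1 (bracket ℓ) := by
        rw [mul_assoc]
        refine mul_le_mul_of_nonneg_left (hK _ _ hX (two_le_bracket ℓ) le_rfl ?_) hC₀
        linarith [bracket_pos ℓ]

lemma sumsDecay_shifted (hd : 1 ≤ d) (e : ℝ) (α : ℕ) {b : ℝ} (hb : b ≤ d) :
    SumsDecay (d := d) (e + (d - b)) (α + 1) {x | ‖x.2 - x.1‖ ≤ 2 * ‖x.1‖} fun x =>
      logWeight e α (bracket x.1) * bracket (x.2 - x.1) ^ (-b) := by
  obtain ⟨C, hC⟩ := exists_sum_bracket_sub_rpow_le hd hb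
  refine ⟨C, fun ℓ T hT => ?_⟩
  simp only [abs_mul, abs_of_pos (logWeight_bracket_pos _ _ _),
    abs_of_pos (Real.rpow_pos_of_pos (bracket_pos _) _)]
  rw [← Finset.mul_sum, ← logWeight_mul_logWeight _ _ _ _ (bracket_pos ℓ), mul_left_comm]
  exact mul_le_mul_of_nonneg_left (hC ℓ T hT) (logWeight_bracket_pos _ _ _).le

/-- The cross-correlation `ℓ ↦ ∑ m, f(m) γ(m - ℓ)`, i.e. the convolution of `f` with `γ(-·)`. -/
def crossCorrelation (f γ : (Fin d → ℤ) → ℝ) (ℓ : Fin d → ℤ) : ℝ :=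
  ∑' m, f m * γ (m - ℓ)

lemma fwdDiff_crossCorrelation {f γ : (Fin d → ℤ) → ℝ}
    (h : ∀ ℓ, Summable fun m => f m * γ (m - ℓ)) (a : Fin d → ℤ) :
    Δ_[a] (crossCorrelation f γ) = crossCorrelation f (Δ_[-a] γ) := by
  funext ℓ
  simp only [crossCorrelation, fwdDiff, mul_sub, ← sub_eq_add_neg, sub_sub]
  exact ((h (ℓ + a)).tsum_sub (h ℓ)).symm

lemma HasDecay.summable_mul_comp_sub (hd : 1 ≤ d) {e e' : ℝ} {α β : ℕ} {f γ : (Fin d → ℤ) → ℝ}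
    (hf : HasDecay e α f) (hγ : HasDecay e' β γ) (he : e + e' < -d) (ℓ : Fin d → ℤ) :
    Summable fun m => f m * γ (m - ℓ) := by
  simpa only [sub_eq_add_neg] using (hf.mul (hγ.comp_add_right (-ℓ))).summable hd he

/-- `γ(z) = O(⟨z⟩ ^ (-b))`, and every difference improves the rate by one power: the decay of a
lattice Green's function after enough differences have been taken. -/
def HasKernelDecay (b : ℝ) (γ : (Fin d → ℤ) → ℝ) : Prop :=
  ∀ s : Multiset (Fin d → ℤ), HasDecay (-b - s.card) 0 (fwdDiffs s γ)

namespace HasKernelDecay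

variable {b : ℝ} {γ : (Fin d → ℤ) → ℝ}

lemma hasDecay (hγ : HasKernelDecay b γ) : HasDecay (-b) 0 γ := by simpa using hγ 0

lemma fwdDiff (hγ : HasKernelDecay b γ) (a : Fin d → ℤ) : HasKernelDecay (b + 1) (Δ_[a] γ) :=
  fun s => by
    rw [fwdDiffs_fwdDiff, ← fwdDiffs_cons]
    refine (hγ (a ::ₘ s)).mono (le_of_eq ?_)
    rw [Multiset.card_cons]
    push_cast
    ring

lemma comp_add_right (hγ : HasKernelDecay b γ) (a : Fin d → ℤ) :
    HasKernelDecay b fun z => γ (z + a) := fun s => by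
  rw [fwdDiffs_comp_add_right]
  exact HasDecay.comp_add_right (hγ s) a

lemma isBigO_fwdDiffs (hγ : HasKernelDecay b γ) {X : Type*} (l : Filter X) (g : X → Fin d → ℤ)
    {n : ℕ} {s : Multiset (Fin d)} (hs : s.card = n) :
    (fun x => fwdDiffs (unitSteps s) γ (g x)) =O[l] fun x => bracket (g x) ^ (-b - (n : ℝ)) := by
  have h := (hγ (unitSteps s)).comp_tendsto (tendsto_top : Tendsto g l ⊤)
  simpa only [Function.comp_def, logWeight_zero_right, unitSteps, Multiset.card_map, hs] using h

lemma isBigO_taylor_comp_sub (hγ : HasKernelDecay b γ) (p : ℕ) :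
    (fun x : (Fin d → ℤ) × (Fin d → ℤ) => taylor p (fun z => γ (z - x.1)) x.2)
      =O[𝓟 {x | ‖x.1‖ / 2 ≤ ‖x.2‖}] fun x =>
        bracket x.1 ^ (-b - p + 1) * bracket x.2 ^ ((p : ℝ) - 1) := by
  simp only [taylor, Finset.sum_apply, Pi.smul_apply, smul_eq_mul, sub_eq_add_neg,
    fwdDiffs_comp_add_right, zero_add]
  refine IsBigO.fun_sum fun n hn => IsBigO.fun_sum fun s _ => ?_
  have hn : (n : ℝ) + 1 ≤ p := by exact_mod_cast Finset.mem_range.1 hn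
  set l := 𝓟 {x : (Fin d → ℤ) × (Fin d → ℤ) | ‖x.1‖ / 2 ≤ ‖x.2‖}
  have hcoeff : (fun x => fwdDiffs (unitSteps s) γ (-x.1)) =O[l]
      fun x => bracket x.1 ^ (-b - (n : ℝ)) := by
    simpa only [bracket, norm_neg] using hγ.isBigO_fwdDiffs l (fun x => -x.1) s.card_coe
  have hbinom : (fun x => latticeBinomial s x.2) =O[l] fun x => bracket x.2 ^ (n : ℝ) := by
    have h := (hasDecay_of_mem_polySubmodule
      (latticeBinomial_mem (s : Multiset (Fin d)))).comp_tendsto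
        (tendsto_top : Tendsto Prod.snd l ⊤)
    simpa [Function.comp_def, logWeight_zero_right, s.card_coe] using h
  have hratio : (fun x => bracket x.2 ^ (n - (p - 1) : ℝ)) =O[l]
      fun x => bracket x.1 ^ (n - (p - 1) : ℝ) :=
    isBigO_rpow_of_nonpos two_pos (fun x => bracket_pos x.1) (by linarith) <|
      eventually_principal.2 fun x hx => by
        have hx : ‖x.1‖ / 2 ≤ ‖x.2‖ := hx
        unfold bracket
        linarith
  refine (hcoeff.mul hbinom).trans ?_
  refine ((isBigO_refl (fun x => bracket x.1 ^ (-b - (n : ℝ)) * bracket x.2 ^ ((p : ℝ) - 1)) l).mul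
    hratio).congr (fun x => ?_) fun x => ?_
  · rw [mul_assoc, ← Real.rpow_add (bracket_pos _), add_sub_cancel]
  · rw [mul_right_comm, ← Real.rpow_add (bracket_pos _)]
    congr 2
    ring

lemma isBigO_sub_taylor_comp_sub (hγ : HasKernelDecay b γ) (hb : 0 ≤ b) (p : ℕ) :
    (fun x : (Fin d → ℤ) × (Fin d → ℤ) => γ (x.2 - x.1) - taylor p (fun z => γ (z - x.1)) x.2)
      =O[𝓟 {x | ‖x.2‖ ≤ ‖x.1‖ / 2}] fun x =>
        bracket x.1 ^ (-b - p) * bracket x.2 ^ (p : ℝ) := by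
  have hsum : (fun x : (Fin d → ℤ) × (Fin d → ℤ) =>
      ∑ s : Sym (Fin d) p, ‖fwdDiffs (unitSteps s) γ (x.2 - x.1)‖)
      =O[𝓟 {x | ‖x.2‖ ≤ ‖x.1‖ / 2}] fun x => bracket x.1 ^ (-b - (p : ℝ)) :=
    IsBigO.fun_sum fun s _ => ((hγ.isBigO_fwdDiffs _ _ s.card_coe).trans <|
      isBigO_rpow_of_nonpos two_pos (fun x : (Fin d → ℤ) × (Fin d → ℤ) => bracket_pos x.1)
        (by linarith [p.cast_nonneg (α := ℝ)]) (eventually_principal.2 fun x hx => by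
          have hx : ‖x.2‖ ≤ ‖x.1‖ / 2 := hx
          unfold bracket
          linarith [norm_sub_norm_le x.1 x.2, norm_sub_rev x.1 x.2])).norm_left
  obtain ⟨C, hC, hsum⟩ := hsum.exists_nonneg
  refine .of_bound (d ^ p * C) (eventually_principal.2 fun x hx => ?_)
  have hx₁ := bracket_pos x.1
  have hx₂ := bracket_pos x.2
  have hΔ : ∀ s : Multiset (Fin d), s.card = p → ∀ z, ‖z‖ ≤ ‖x.2‖ →
      |fwdDiffs (unitSteps s) (fun z => γ (z - x.1)) z| ≤ C * bracket x.1 ^ (-b - (p : ℝ)) :=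
    fun s hs z hz => by
      have h := isBigOWith_principal.1 hsum (x.1, z) (hz.trans hx)
      rw [Real.norm_of_nonneg (by positivity), Real.norm_of_nonneg (by positivity)] at h
      simp only [sub_eq_add_neg, fwdDiffs_comp_add_right] at h ⊢
      exact (Finset.single_le_sum (f := fun s : Sym (Fin d) p =>
        ‖fwdDiffs (unitSteps s) γ (z + -x.1)‖) (fun _ _ => norm_nonneg _)
        (Finset.mem_univ ⟨s, hs⟩)).trans h
  calc _ ≤ (d * ‖x.2‖) ^ p * (C * bracket x.1 ^ (-b - (p : ℝ))) :=
        abs_sub_taylor_le (by positivity) (norm_nonneg _) hΔ le_rfl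
    _ ≤ (d * bracket x.2) ^ p * (C * bracket x.1 ^ (-b - (p : ℝ))) := by
        gcongr
        exact le_add_of_nonneg_right zero_le_two
    _ = d ^ p * C * ‖bracket x.1 ^ (-b - (p : ℝ)) * bracket x.2 ^ (p : ℝ)‖ := by
        rw [Real.norm_of_nonneg (by positivity), Real.rpow_natCast, mul_pow]
        ring

lemma sumsDecay_sub_taylor (hγ : HasKernelDecay b γ) (hd : 1 ≤ d) (hb : 0 ≤ b) {p α : ℕ}
    {f : (Fin d → ℤ) → ℝ} (hf : HasDecay (-(d : ℝ) - p) α f) :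
    SumsDecay (-b - p) (α + 1) {x | ‖x.2‖ ≤ ‖x.1‖ / 2} fun x =>
      f x.2 * (γ (x.2 - x.1) - taylor p (fun z => γ (z - x.1)) x.2) := by
  refine (sumsDecay_near hd (-b - p) α).of_isBigO subset_rfl ?_
  have hf₂ := hf.comp_tendsto (tendsto_top :
    Tendsto Prod.snd (𝓟 {x : (Fin d → ℤ) × (Fin d → ℤ) | ‖x.2‖ ≤ ‖x.1‖ / 2}) ⊤)
  refine (hf₂.mul (hγ.isBigO_sub_taylor_comp_sub hb p)).congr (fun _ => rfl) fun x => ?_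
  rw [Function.comp_apply, mul_left_comm, mul_comm (logWeight _ _ _),
    rpow_mul_logWeight _ _ _ (bracket_pos _)]
  ring_nf

lemma sumsDecay_taylor (hγ : HasKernelDecay b γ) (hd : 1 ≤ d) {p α : ℕ}
    {f : (Fin d → ℤ) → ℝ} (hf : HasDecay (-(d : ℝ) - p) α f) :
    SumsDecay (-b - p) (α + 1) {x | ‖x.1‖ / 2 ≤ ‖x.2‖} fun x =>
      f x.2 * taylor p (fun z => γ (z - x.1)) x.2 := by
  rw [← add_sub_cancel_right (-b - (p : ℝ)) 1]
  refine (sumsDecay_far hd (-b - p + 1) α one_pos).of_isBigO subset_rfl ?_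
  have hf₂ := hf.comp_tendsto (tendsto_top :
    Tendsto Prod.snd (𝓟 {x : (Fin d → ℤ) × (Fin d → ℤ) | ‖x.1‖ / 2 ≤ ‖x.2‖}) ⊤)
  refine (hf₂.mul (hγ.isBigO_taylor_comp_sub p)).congr (fun _ => rfl) fun x => ?_
  rw [Function.comp_apply, mul_left_comm, mul_comm (logWeight _ _ _),
    rpow_mul_logWeight _ _ _ (bracket_pos _)]
  ring_nf

lemma sumsDecay_mul_of_norm_sub_le (hγ : HasKernelDecay b γ) (hd : 1 ≤ d) (hb : b ≤ d)
    {p α : ℕ} {f : (Fin d → ℤ) → ℝ} (hf : HasDecay (-(d : ℝ) - p) α f) :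
    SumsDecay (-b - p) (α + 1) {x | ‖x.1‖ / 2 ≤ ‖x.2‖ ∧ ‖x.2 - x.1‖ ≤ 2 * ‖x.1‖} fun x =>
      f x.2 * γ (x.2 - x.1) := by
  have h := sumsDecay_shifted hd (-(d : ℝ) - p) α hb
  rw [show -(d : ℝ) - p + (d - b) = -b - p by ring] at h
  refine h.of_isBigO (fun x hx => hx.2) ?_
  set l := 𝓟 {x : (Fin d → ℤ) × (Fin d → ℤ) | ‖x.1‖ / 2 ≤ ‖x.2‖ ∧ ‖x.2 - x.1‖ ≤ 2 * ‖x.1‖}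
  obtain ⟨C, hC⟩ := exists_logWeight_le_of_comparable (-(d : ℝ) - p) α
    (by norm_num : (1 : ℝ) ≤ 3)
  have hcomparable : (fun x : (Fin d → ℤ) × (Fin d → ℤ) =>
      logWeight (-(d : ℝ) - p) α (bracket x.2)) =O[l]
      fun x => logWeight (-(d : ℝ) - p) α (bracket x.1) := by
    refine .of_bound C (eventually_principal.2 fun x hx => ?_)
    obtain ⟨hfar, hnear⟩ : ‖x.1‖ / 2 ≤ ‖x.2‖ ∧ ‖x.2 - x.1‖ ≤ 2 * ‖x.1‖ := hx
    rw [Real.norm_of_nonneg (logWeight_bracket_pos _ _ _).le,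
      Real.norm_of_nonneg (logWeight_bracket_pos _ _ _).le]
    refine hC _ _ (two_le_bracket _) (two_le_bracket _) ?_ ?_ <;> unfold bracket
    · linarith [norm_sub_norm_le x.2 x.1]
    · linarith [norm_nonneg x.2]
  have hγ' := hγ.hasDecay.comp_tendsto (tendsto_top : Tendsto (fun x => x.2 - x.1) l ⊤)
  have hf₂ := (hf.comp_tendsto (tendsto_top : Tendsto Prod.snd l ⊤)).trans hcomparable
  simpa only [Function.comp_def, logWeight_zero_right] using hf₂.mul hγ'

lemma sumsDecay_mul_of_le_norm_sub (hγ : HasKernelDecay b γ) (hd : 1 ≤ d) (hb : 0 < b)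
    {p α : ℕ} {f : (Fin d → ℤ) → ℝ} (hf : HasDecay (-(d : ℝ) - p) α f) :
    SumsDecay (-b - p) (α + 1) {x | 2 * ‖x.1‖ ≤ ‖x.2 - x.1‖} fun x =>
      f x.2 * γ (x.2 - x.1) := by
  have h := sumsDecay_far hd 0 α (by positivity : 0 < b + p)
  rw [show 0 - (b + p) = -b - p by ring] at h
  set l := 𝓟 {x : (Fin d → ℤ) × (Fin d → ℤ) | 2 * ‖x.1‖ ≤ ‖x.2 - x.1‖}
  have hle : ∀ x : (Fin d → ℤ) × (Fin d → ℤ), 2 * ‖x.1‖ ≤ ‖x.2 - x.1‖ →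
      ‖x.1‖ ≤ ‖x.2‖ ∧ ‖x.2‖ ≤ 2 * ‖x.2 - x.1‖ := fun x hx => by
    constructor <;> linarith [norm_sub_le x.2 x.1, norm_sub_norm_le x.2 x.1, norm_nonneg x.1]
  refine h.of_isBigO (fun x hx => ?_) ?_
  · exact (half_le_self (norm_nonneg x.1)).trans (hle x hx).1
  have hγ' : (fun x : (Fin d → ℤ) × (Fin d → ℤ) => γ (x.2 - x.1)) =O[l]
      fun x => bracket x.2 ^ (-b) := by
    have hγ' := hγ.hasDecay.comp_tendsto (tendsto_top : Tendsto (fun x => x.2 - x.1) l ⊤)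
    simp only [Function.comp_def, logWeight_zero_right] at hγ'
    refine hγ'.trans (isBigO_rpow_of_nonpos two_pos (fun x => bracket_pos x.2) (by linarith)
      (eventually_principal.2 fun x hx => ?_))
    unfold bracket
    linarith [(hle x hx).2]
  refine ((hf.comp_tendsto (tendsto_top : Tendsto Prod.snd l ⊤)).mul hγ').congr
    (fun _ => rfl) fun x => ?_
  rw [Function.comp_apply, mul_comm, rpow_mul_logWeight _ _ _ (bracket_pos _), Real.rpow_zero,
    one_mul]
  ring_nf

/-- Since `f` annihilates the Taylor polynomials of `γ(· - ℓ)`, they may be subtracted from the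
kernel; this gains decay where `‖m‖ ≤ ‖ℓ‖ / 2` and loses none elsewhere. -/
lemma hasDecay_crossCorrelation (hγ : HasKernelDecay b γ) (hd : 1 ≤ d) (hb : 0 < b)
    (hbd : b ≤ d) {p α : ℕ} {f : (Fin d → ℤ) → ℝ} (hf : HasDecay (-(d : ℝ) - p) α f)
    (hmom : Annihilates p f) :
    HasDecay (-b - p) (α + 1) (crossCorrelation f γ) := by
  have hfar : SumsDecay (-b - p) (α + 1) {x | ‖x.1‖ / 2 ≤ ‖x.2‖} fun x => f x.2 * γ (x.2 - x.1) :=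
    .of_subset_union (fun x hx => (le_total ‖x.2 - x.1‖ (2 * ‖x.1‖)).imp_left (.intro hx))
      (hγ.sumsDecay_mul_of_norm_sub_le hd hbd hf) (hγ.sumsDecay_mul_of_le_norm_sub hd hb hf)
  have hfar_sub := hfar.sub (hγ.sumsDecay_taylor hd hf)
  simp only [← mul_sub] at hfar_sub
  have hall : SumsDecay (-b - p) (α + 1) Set.univ fun x : (Fin d → ℤ) × (Fin d → ℤ) =>
      f x.2 * (γ (x.2 - x.1) - taylor p (fun z => γ (z - x.1)) x.2) :=
    .of_subset_union (fun x _ => le_total ‖x.2‖ (‖x.1‖ / 2))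
      (hγ.sumsDecay_sub_taylor hd hb.le hf) hfar_sub
  convert hall.hasDecay_tsum using 2 with ℓ
  have htaylor := hmom _ (taylor_mem_polySubmodule p fun z => γ (z - ℓ))
  have h := (hall.summable ℓ).hasSum.add htaylor
  simp only [← mul_add, sub_add_cancel, add_zero] at h
  exact h.tsum_eq

end HasKernelDecay

end Convolution

/-! ### Difference operators in divergence form -/

section Operator

variable {V ι κ : Type*} [AddCommGroup V] [Fintype ι] [Fintype κ]
  (a : ι → V) (K : ι → ι → κ → κ → ℝ)

/-- The stress `∑ ρ, K_{σρ} D_ρ v` of the field `v`, whose components are indexed by `κ`. The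
label `ρ : ι` stands for the step `a ρ`. -/
def stress (v : κ → V → ℝ) (σ : ι) (i : κ) : V → ℝ :=
  ∑ ρ, ∑ k, K σ ρ i k • Δ_[a ρ] (v k)

/-- The operator `H[v] = ∑ σ, D_{-σ} (∑ ρ, K_{σρ} D_ρ v)`, component by component. -/
def divStress (v : κ → V → ℝ) (i : κ) : V → ℝ :=
  ∑ σ, Δ_[-a σ] (stress a K v σ i)

/-- The flux in direction `a σ` in Green's second identity for `divStress`. -/
def greenFlux (v g : κ → V → ℝ) (σ : ι) (z : V) : ℝ :=
  ∑ i, (v i z * stress a K g σ i (z + -a σ) - stress a K v σ i (z + -a σ) * g i z)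

lemma divStress_comp_add_right (v : κ → V → ℝ) (i : κ) (b : V) :
    divStress a K (fun k z => v k (z + b)) i = fun z => divStress a K v i (z + b) := by
  funext z
  simp only [divStress, stress, fwdDiff, Finset.sum_apply, Pi.smul_apply, add_right_comm _ b]

lemma divStress_fwdDiff (v : κ → V → ℝ) (i : κ) (b : V) :
    divStress a K (fun k => Δ_[b] (v k)) i = Δ_[b] (divStress a K v i) := by
  simp only [divStress, stress, fwdDiff_finsetSum, fwdDiff_const_smul, fwdDiff_left_comm b]

lemma divStress_fwdDiffs (v : κ → V → ℝ) (i : κ) (t : Multiset V) :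
    divStress a K (fun k => fwdDiffs t (v k)) i = fwdDiffs t (divStress a K v i) := by
  induction t using Multiset.induction with
  | empty => rfl
  | cons b t ih => simp only [fwdDiffs_cons, divStress_fwdDiff, ih]

variable {K}

lemma sum_stress_mul_fwdDiff_comm (hK : ∀ σ ρ i j, K σ ρ i j = K ρ σ j i) (v g : κ → V → ℝ)
    (z : V) :
    ∑ σ, ∑ i, stress a K v σ i z * Δ_[a σ] (g i) z =
      ∑ σ, ∑ i, stress a K g σ i z * Δ_[a σ] (v i) z := by
  have hexpand : ∀ v g : κ → V → ℝ, ∑ σ, ∑ i, stress a K v σ i z * Δ_[a σ] (g i) z =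
      ∑ x : ι × ι, ∑ y : κ × κ,
        K x.1 x.2 y.1 y.2 * (Δ_[a x.2] (v y.2) z * Δ_[a x.1] (g y.1) z) := fun v g => by
    simp only [stress, Finset.sum_apply, Pi.smul_apply, smul_eq_mul, Finset.sum_mul, mul_assoc,
      Fintype.sum_prod_type]
    exact Finset.sum_congr rfl fun _ _ => Finset.sum_comm
  rw [hexpand, hexpand]
  refine Fintype.sum_equiv (Equiv.prodComm ι ι) _ _ fun x =>
    Fintype.sum_equiv (Equiv.prodComm κ κ) _ _ fun y => ?_
  rw [hK]
  exact congrArg _ (mul_comm _ _)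

lemma sum_fwdDiff_greenFlux (hK : ∀ σ ρ i j, K σ ρ i j = K ρ σ j i) (v g : κ → V → ℝ) (z : V) :
    ∑ σ, Δ_[a σ] (greenFlux a K v g σ) z =
      ∑ i, divStress a K v i z * g i z - ∑ i, v i z * divStress a K g i z := by
  have hflux : ∀ σ, Δ_[a σ] (greenFlux a K v g σ) z =
      (∑ i, Δ_[-a σ] (stress a K v σ i) z * g i z - ∑ i, v i z * Δ_[-a σ] (stress a K g σ i) z) +
        (∑ i, stress a K g σ i z * Δ_[a σ] (v i) z -
          ∑ i, stress a K v σ i z * Δ_[a σ] (g i) z) := fun σ => by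
    simp only [greenFlux, fwdDiff, ← Finset.sum_sub_distrib, ← Finset.sum_add_distrib,
      add_neg_cancel_right]
    exact Finset.sum_congr rfl fun _ _ => by ring
  simp only [hflux, Finset.sum_add_distrib, Finset.sum_sub_distrib,
    sum_stress_mul_fwdDiff_comm a hK v g, sub_self, add_zero]
  simp only [divStress, Finset.sum_apply, Finset.sum_mul, Finset.mul_sum]
  exact congrArg₂ _ Finset.sum_comm Finset.sum_comm

end Operator

/-! ### Green's representation formula -/

section GreenRepresentation

open Asymptotics

variable {d : ℕ} {ι κ : Type*} [Fintype ι] [Fintype κ] {a : ι → Fin d → ℤ}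
  {K : ι → ι → κ → κ → ℝ}

lemma tendsto_stress {v : κ → (Fin d → ℤ) → ℝ}
    (hv : ∀ k b, Tendsto (Δ_[b] (v k)) cofinite (𝓝 0)) (σ : ι) (i : κ) :
    Tendsto (stress a K v σ i) cofinite (𝓝 0) := by
  have h := tendsto_finsetSum Finset.univ fun ρ _ => tendsto_finsetSum Finset.univ fun k _ =>
    (hv k (a ρ)).const_mul (K σ ρ i k)
  simpa [stress, funext_iff, Finset.sum_fn] using h

lemma hasDecay_stress {e : ℝ} {α : ℕ} {v : κ → (Fin d → ℤ) → ℝ}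
    (hv : ∀ k b, HasDecay e α (Δ_[b] (v k))) (σ : ι) (i : κ) :
    HasDecay e α (stress a K v σ i) :=
  IsBigO.sum fun ρ _ => IsBigO.sum fun k _ => IsBigO.const_smul_left (hv k (a ρ)) (K σ ρ i k)

lemma greenFlux_isLittleO {v g : κ → (Fin d → ℤ) → ℝ}
    (hv : ∀ k b, Tendsto (Δ_[b] (v k)) cofinite (𝓝 0))
    (hg : ∀ k, HasDecay (1 - (d : ℝ)) 0 (g k))
    (hΔg : ∀ k b, HasDecay (-(d : ℝ)) 0 (Δ_[b] (g k))) (σ : ι) :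
    greenFlux a K v g σ =o[cofinite] fun z => bracket z ^ (1 - (d : ℝ)) := by
  have hdecay : ∀ {e : ℝ} {f : (Fin d → ℤ) → ℝ}, HasDecay e 0 f →
      f =O[cofinite] fun z => bracket z ^ e := fun h => by
    simpa only [logWeight_zero_right] using IsBigO.mono h le_top
  have hv_stress : ∀ i, (fun z => v i z * stress a K g σ i (z + -a σ)) =o[cofinite]
      fun z => bracket z ^ (1 - (d : ℝ)) := fun i => by
    refine ((isLittleO_bracket_of_tendsto_fwdDiff fun j => hv i (Pi.single j 1)).mul_isBigO
      (hdecay ((hasDecay_stress hΔg σ i).comp_add_right (-a σ)))).congr_right fun z => ?_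
    rw [sub_eq_add_neg, Real.rpow_add (bracket_pos z), Real.rpow_one]
  have hstress_g : ∀ i, (fun z => stress a K v σ i (z + -a σ) * g i z) =o[cofinite]
      fun z => bracket z ^ (1 - (d : ℝ)) := fun i => by
    have h := tendsto_comp_add_right_cofinite (tendsto_stress (a := a) (K := K) hv σ i) (-a σ)
    simpa only [one_mul] using ((isLittleO_one_iff ℝ).2 h).mul_isBigO (hdecay (hg i))
  exact IsLittleO.fun_sum fun i _ => (hv_stress i).sub (hstress_g i)

lemma tsum_divStress_mul_eq (hd : 1 ≤ d) (hK : ∀ σ ρ i j, K σ ρ i j = K ρ σ j i)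
    {v g : κ → (Fin d → ℤ) → ℝ} (hv : ∀ k b, Tendsto (Δ_[b] (v k)) cofinite (𝓝 0))
    (hg : ∀ k, HasDecay (1 - (d : ℝ)) 0 (g k))
    (hΔg : ∀ k b, HasDecay (-(d : ℝ)) 0 (Δ_[b] (g k)))
    (hvg : Summable fun z => ∑ i, divStress a K v i z * g i z)
    (hgv : Summable fun z => ∑ i, v i z * divStress a K g i z) :
    ∑' z, ∑ i, divStress a K v i z * g i z = ∑' z, ∑ i, v i z * divStress a K g i z := by
  have h := tsum_eq_zero_of_sum_fwdDiff hd Finset.univ a (greenFlux a K v g)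
    (fun σ _ => greenFlux_isLittleO hv hg hΔg σ)
    (by simpa only [sum_fwdDiff_greenFlux a hK] using hvg.sub hgv)
  simp only [sum_fwdDiff_greenFlux a hK] at h
  rwa [hvg.tsum_sub hgv, sub_eq_zero] at h

/-- `G k i` is the `i`-th component of the `k`-th column of a Green's function of `divStress a K`
whose differences of any order `n ≥ 1` are `O(⟨z⟩ ^ (2 - d - n))`. -/
structure IsGreenMatrix [DecidableEq κ] (a : ι → Fin d → ℤ) (K : ι → ι → κ → κ → ℝ)
    (G : κ → κ → (Fin d → ℤ) → ℝ) : Prop where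
  divStress_eq : ∀ k i z, divStress a K (G k) i z = if z = 0 ∧ i = k then 1 else 0
  hasDecay : ∀ k i t, t ≠ 0 → HasDecay (2 - (d : ℝ) - t.card) 0 (fwdDiffs t (G k i))

namespace IsGreenMatrix

variable [DecidableEq κ] {G : κ → κ → (Fin d → ℤ) → ℝ}

lemma hasKernelDecay_fwdDiff (hG : IsGreenMatrix a K G) (k i : κ) (b : Fin d → ℤ) :
    HasKernelDecay ((d : ℝ) - 1) (Δ_[b] (G k i)) := fun t => by
  rw [fwdDiffs_fwdDiff, ← fwdDiffs_cons]
  refine (hG.hasDecay k i (b ::ₘ t) (Multiset.cons_ne_zero)).mono (le_of_eq ?_)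
  rw [Multiset.card_cons]
  push_cast
  ring

lemma hasSum_mul_divStress_fwdDiff (hG : IsGreenMatrix a K G) (v : κ → (Fin d → ℤ) → ℝ) (k : κ)
    (b ℓ : Fin d → ℤ) :
    HasSum (fun m => ∑ i, v i m *
      divStress a K (fun i m => Δ_[-b] (G k i) (m - ℓ)) i m) (Δ_[b] (v k) ℓ) := by
  have hdiv : ∀ i m, divStress a K (fun i m => Δ_[-b] (G k i) (m - ℓ)) i m =
      (if m = ℓ + b ∧ i = k then 1 else 0) - if m = ℓ ∧ i = k then 1 else 0 := fun i m => by
    simp only [sub_eq_add_neg _ ℓ]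
    rw [divStress_comp_add_right, divStress_fwdDiff]
    simp only [fwdDiff, hG.divStress_eq, ← sub_eq_add_neg, sub_sub, sub_eq_zero]
  have hsingle : ∀ n, HasSum (fun m => ∑ i, v i m * if m = n ∧ i = k then 1 else 0) (v k n) := by
    intro n
    convert hasSum_ite_eq n (v k n) using 2 with m
    by_cases hm : m = n <;> simp [hm]
  simp only [hdiv, mul_sub, Finset.sum_sub_distrib]
  exact (hsingle (ℓ + b)).sub (hsingle ℓ)

lemma fwdDiff_eq_sum_crossCorrelation (hG : IsGreenMatrix a K G) (hd : 2 ≤ d)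
    (hK : ∀ σ ρ i j, K σ ρ i j = K ρ σ j i) {v : κ → (Fin d → ℤ) → ℝ}
    (hv : ∀ k b, Tendsto (Δ_[b] (v k)) cofinite (𝓝 0)) {p α : ℕ}
    (hf : ∀ i, HasDecay (-(d : ℝ) - p) α (divStress a K v i)) (k : κ) (b : Fin d → ℤ) :
    Δ_[b] (v k) = ∑ i, crossCorrelation (divStress a K v i) (Δ_[-b] (G k i)) := by
  have hd' : (2 : ℝ) ≤ d := by exact_mod_cast hd
  funext ℓ
  have hg : ∀ i, HasKernelDecay ((d : ℝ) - 1) fun m => Δ_[-b] (G k i) (m - ℓ) := fun i => by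
    simpa only [sub_eq_add_neg _ ℓ] using
      HasKernelDecay.comp_add_right (hG.hasKernelDecay_fwdDiff k i (-b)) (-ℓ)
  have hsummable := fun i =>
    (hf i).summable_mul_comp_sub (by omega) (hG.hasKernelDecay_fwdDiff k i (-b)).hasDecay
      (by linarith [p.cast_nonneg (α := ℝ)]) ℓ
  have hrhs := hG.hasSum_mul_divStress_fwdDiff v k b ℓ
  have hgreen := tsum_divStress_mul_eq (by omega) hK hv (fun i => by simpa using (hg i).hasDecay)
    (fun i c => by simpa using ((hg i).fwdDiff c).hasDecay)
    (summable_sum fun i _ => hsummable i) hrhs.summable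
  rw [hrhs.tsum_eq, Summable.tsum_finsetSum fun i _ => hsummable i] at hgreen
  simpa only [Finset.sum_apply, crossCorrelation] using hgreen.symm

lemma hasDecay_fwdDiff (hG : IsGreenMatrix a K G) (hd : 2 ≤ d)
    (hK : ∀ σ ρ i j, K σ ρ i j = K ρ σ j i) {v : κ → (Fin d → ℤ) → ℝ}
    (hv : ∀ k b, Tendsto (Δ_[b] (v k)) cofinite (𝓝 0)) {p α : ℕ}
    (hf : ∀ i, HasDecay (-(d : ℝ) - p) α (divStress a K v i))
    (hmom : ∀ i, Annihilates p (divStress a K v i)) (k : κ) (b : Fin d → ℤ) :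
    HasDecay (1 - (d : ℝ) - p) (α + 1) (Δ_[b] (v k)) := by
  have hd' : (2 : ℝ) ≤ d := by exact_mod_cast hd
  rw [hG.fwdDiff_eq_sum_crossCorrelation hd hK hv hf, ← neg_sub (d : ℝ) 1]
  exact IsBigO.sum fun i _ => (hG.hasKernelDecay_fwdDiff k i (-b)).hasDecay_crossCorrelation
    (by omega) (by linarith) (by linarith) (hf i) (hmom i)

lemma hasDecay_fwdDiff_fwdDiff (hG : IsGreenMatrix a K G) (hd : 2 ≤ d)
    (hK : ∀ σ ρ i j, K σ ρ i j = K ρ σ j i) {v : κ → (Fin d → ℤ) → ℝ}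
    (hv : ∀ k b, Tendsto (Δ_[b] (v k)) cofinite (𝓝 0)) {p α : ℕ}
    (hf : ∀ i, HasDecay (-(d : ℝ) - p) α (divStress a K v i))
    (hmom : ∀ i, Annihilates p (divStress a K v i)) (k : κ) (b c : Fin d → ℤ) :
    HasDecay (-(d : ℝ) - p) (α + 1) (Δ_[c] (Δ_[b] (v k))) := by
  have hd' : (2 : ℝ) ≤ d := by exact_mod_cast hd
  have hγ := fun i => hG.hasKernelDecay_fwdDiff k i (-b)
  have hγ' : ∀ i, HasKernelDecay (d : ℝ) (Δ_[-c] (Δ_[-b] (G k i))) := fun i => by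
    simpa only [sub_add_cancel] using (hγ i).fwdDiff (-c)
  rw [hG.fwdDiff_eq_sum_crossCorrelation hd hK hv hf, fwdDiff_finsetSum]
  refine IsBigO.sum fun i _ => ?_
  rw [fwdDiff_crossCorrelation fun ℓ => (hf i).summable_mul_comp_sub (by omega) (hγ i).hasDecay
    (by linarith [p.cast_nonneg (α := ℝ)]) ℓ]
  exact (hγ' i).hasDecay_crossCorrelation (by omega) (by linarith) le_rfl (hf i) (hmom i)

/-- `n` differences of `v` solve the equation with a right-hand side whose first `p + n` moments
vanish. -/
lemma hasDecay_fwdDiffs (hG : IsGreenMatrix a K G) (hd : 2 ≤ d)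
    (hK : ∀ σ ρ i j, K σ ρ i j = K ρ σ j i) {v : κ → (Fin d → ℤ) → ℝ}
    (hv : ∀ k b, Tendsto (Δ_[b] (v k)) cofinite (𝓝 0)) {p α n : ℕ}
    (hf : ∀ i t, t.card ≤ n → HasDecay (-(d : ℝ) - (p + t.card : ℕ)) α
      (fwdDiffs t (divStress a K v i)))
    (hmom : ∀ i, Annihilates p (divStress a K v i)) (k : κ) {t : Multiset (Fin d → ℤ)}
    (ht : t.card = n + 2) :
    HasDecay (-(d : ℝ) - (p + n : ℕ)) (α + 1) (fwdDiffs t (v k)) := by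
  obtain ⟨c, t', rfl, ht'⟩ := Multiset.card_eq_succ_iff.1 ht
  obtain ⟨b, t, rfl, rfl⟩ := Multiset.card_eq_succ_iff.1 ht'
  rw [fwdDiffs_cons, fwdDiffs_cons]
  refine hG.hasDecay_fwdDiff_fwdDiff hd hK (v := fun k => fwdDiffs t (v k))
    (fun k b => ?_) (fun i => ?_) (fun i => ?_) k b c
  · rw [← fwdDiffs_fwdDiff]
    exact tendsto_fwdDiffs_cofinite (hv k b) t
  · rw [divStress_fwdDiffs]
    exact hf i t le_rfl
  · rw [divStress_fwdDiffs]
    exact Annihilates.fwdDiffs (by omega) t (hf i) (hmom i)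

end IsGreenMatrix

end GreenRepresentation

/-! ### Fields on the lattice in the coordinates of `ℤ ^ d` -/

section PowersetFormula

lemma exists_map_univ_val_eq {X : Type*} {n : ℕ} {t : Multiset X} (ht : t.card = n) :
    ∃ f : Fin n → X, Finset.univ.val.map f = t := by
  obtain ⟨l, rfl⟩ : ∃ l : List X, (l : Multiset X) = t := ⟨t.toList, t.coe_toList⟩
  subst ht
  exact ⟨l.get, (Fin.univ_val_map l.get).trans (congrArg _ (List.ofFn_get l))⟩

variable {G V 𝕜 ι : Type*} [AddCommGroup G] [AddCommGroup V] [Ring 𝕜] [Module 𝕜 V]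

lemma sum_powerset_smul_eq_fwdDiffs (a : ι → G) (φ : G → V) (I : Finset ι) (z : G) :
    ∑ S ∈ I.powerset, (-1 : 𝕜) ^ (I.card - S.card) • φ (z + ∑ i ∈ S, a i) =
      fwdDiffs (I.val.map a) φ z := by
  classical
  induction I using Finset.induction_on generalizing z with
  | empty => simp
  | insert x s hx ih =>
    rw [Finset.insert_val_of_notMem hx, Multiset.map_cons, fwdDiffs_cons, _root_.fwdDiff, ← ih,
      ← ih, ← Finset.sum_sub_distrib, Finset.sum_powerset_insert hx, ← Finset.sum_add_distrib]
    refine Finset.sum_congr rfl fun t ht => ?_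
    have hts := Finset.mem_powerset.1 ht
    have hxt : x ∉ t := fun h => hx (hts h)
    rw [Finset.card_insert_of_notMem hx, Finset.card_insert_of_notMem hxt, Finset.sum_insert hxt,
      Nat.add_sub_add_right, Nat.sub_add_comm (Finset.card_le_card hts), pow_succ, mul_neg_one,
      neg_smul, add_assoc]
    abel

end PowersetFormula

section EuclideanNorms

open Asymptotics

variable {X ι : Type*} [Fintype ι] {l : Filter X} {w : X → ℝ} {d N : ℕ}

lemma isBigO_sqrt_sum_sq_iff {f : X → ι → ℝ} :
    (fun x => √(∑ i, f x i ^ 2)) =O[l] w ↔ ∀ i, (fun x => f x i) =O[l] w := by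
  have hnorm : (fun x => √(∑ i, f x i ^ 2)) = fun x => ‖WithLp.toLp 2 (f x)‖ := by
    simp [EuclideanSpace.norm_eq]
  let e := EuclideanSpace.equiv ι ℝ
  rw [hnorm, isBigO_norm_left, ← isBigO_pi]
  exact ⟨(e.isBigO_comp _ l).trans, (e.symm.isBigO_comp f l).trans⟩

lemma isBigO_enorm_iff {f : X → Vec N} :
    (fun x => enorm (f x)) =O[l] w ↔ ∀ i, (fun x => f x i) =O[l] w :=
  isBigO_sqrt_sum_sq_iff

lemma isBigO_DnormJ_iff {R : Finset (Vec d)} {j : ℕ} {u : Vec d → Vec N} {g : X → Vec d} :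
    (fun x => DnormJ R j u (g x)) =O[l] w ↔
      ∀ (ρs : Fin j → {x // x ∈ R}) k,
        (fun x => Dmulti (fun i => (ρs i : Vec d)) u (g x) k) =O[l] w :=
  isBigO_sqrt_sum_sq_iff.trans (forall_congr' fun _ => isBigO_enorm_iff)

lemma abs_le_enorm (v : Vec N) (i : Fin N) : |v i| ≤ enorm v :=
  Real.abs_le_sqrt (Finset.single_le_sum (f := fun i => v i ^ 2) (fun _ _ => sq_nonneg _)
    (Finset.mem_univ i))

lemma two_le_ang (v : Vec d) : 2 ≤ ang v := le_add_of_nonneg_left (Real.sqrt_nonneg _)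

end EuclideanNorms

section LatticePoints

open Asymptotics

variable {d N : ℕ} {A : Matrix (Fin d) (Fin d) ℝ}

/-- `latticePt` as an additive homomorphism. -/
def latticePtHom (A : Matrix (Fin d) (Fin d) ℝ) : (Fin d → ℤ) →+ Vec d :=
  AddMonoidHom.mk' (latticePt d A) fun a b => by
    ext i
    simp [latticePt, mul_add, Finset.sum_add_distrib]

lemma latticePtHom_apply (z : Fin d → ℤ) : latticePtHom A z = latticePt d A z := rfl

lemma latticePt_add (a b : Fin d → ℤ) :
    latticePt d A (a + b) = latticePt d A a + latticePt d A b :=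
  map_add (latticePtHom A) a b

lemma intCast_eq_sum_inv_mul_latticePt (hA : IsUnit A.det) (z : Fin d → ℤ) (i : Fin d) :
    (z i : ℝ) = ∑ j, A⁻¹ i j * latticePt d A z j := by
  have h : A⁻¹.mulVec (A.mulVec fun j => (z j : ℝ)) = fun j => (z j : ℝ) := by
    rw [Matrix.mulVec_mulVec, Matrix.nonsing_inv_mul A hA, Matrix.one_mulVec]
  exact (congrFun h i).symm

lemma latticePt_injective (hA : IsUnit A.det) : Function.Injective (latticePt d A) := by
  intro a b h
  ext i
  have hcast : (a i : ℝ) = b i := by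
    rw [intCast_eq_sum_inv_mul_latticePt hA, intCast_eq_sum_inv_mul_latticePt hA, h]
  exact_mod_cast hcast

lemma enorm_latticePt_isTheta_norm (hA : IsUnit A.det) :
    (fun z => enorm (latticePt d A z)) =Θ[⊤] fun z => ‖z‖ := by
  constructor
  · refine isBigO_enorm_iff.2 fun i => IsBigO.fun_sum fun j _ => IsBigO.const_mul_left ?_ _
    exact .of_bound' (.of_forall fun z => by
      simpa [Int.norm_eq_abs] using norm_le_pi_norm z j)
  · refine IsBigO.norm_left (isBigO_pi.2 fun i => IsBigO.of_norm_left ?_)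
    simp only [← Int.norm_cast_real, intCast_eq_sum_inv_mul_latticePt hA]
    exact IsBigO.norm_left <| IsBigO.fun_sum fun j _ =>
      (isBigO_enorm_iff.1 (isBigO_refl _ _) j).const_mul_left _

lemma exists_ang_latticePt_comparable_bracket (hA : IsUnit A.det) :
    ∃ K, 1 ≤ K ∧ ∀ z,
      ang (latticePt d A z) ≤ K * bracket z ∧ bracket z ≤ K * ang (latticePt d A z) := by
  obtain ⟨K, hK⟩ := isBigO_top.1 (enorm_latticePt_isTheta_norm hA).1
  obtain ⟨K', hK'⟩ := isBigO_top.1 (enorm_latticePt_isTheta_norm hA).2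
  refine ⟨max 1 (max K K'), le_max_left _ _, fun z => ?_⟩
  have hz := hK z
  have hz' := hK' z
  have hnonneg : 0 ≤ enorm (latticePt d A z) := Real.sqrt_nonneg _
  rw [norm_norm, Real.norm_of_nonneg hnonneg] at hz hz'
  have h1 : 1 ≤ max 1 (max K K') := le_max_left _ _
  unfold ang bracket
  constructor
  · nlinarith [mul_le_mul_of_nonneg_right ((le_max_left K K').trans (le_max_right 1 _))
      (norm_nonneg z)]
  · nlinarith [mul_le_mul_of_nonneg_right ((le_max_right K K').trans (le_max_right 1 _)) hnonneg]

lemma logWeight_ang_latticePt_isTheta (hA : IsUnit A.det) (e : ℝ) (α : ℕ) :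
    (fun z => logWeight e α (ang (latticePt d A z))) =Θ[⊤] fun z => logWeight e α (bracket z) := by
  obtain ⟨K, hK, hcomparable⟩ := exists_ang_latticePt_comparable_bracket hA
  obtain ⟨C, hC⟩ := exists_logWeight_le_of_comparable e α hK
  have hang := fun z => logWeight_pos e α (two_le_ang (latticePt d A z))
  have hbracket := fun z : Fin d → ℤ => logWeight_bracket_pos e α z
  refine ⟨.of_bound C (.of_forall fun z => ?_), .of_bound C (.of_forall fun z => ?_)⟩ <;>
    rw [Real.norm_of_nonneg (hang z).le, Real.norm_of_nonneg (hbracket z).le]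
  · exact hC _ _ (two_le_ang _) (two_le_bracket z) (hcomparable z).1 (hcomparable z).2
  · exact hC _ _ (two_le_bracket z) (two_le_ang _) (hcomparable z).2 (hcomparable z).1

lemma hasDecay_iff_exists_le_ang (hA : IsUnit A.det) {e : ℝ} {α : ℕ} {φ : (Fin d → ℤ) → ℝ}
    (hφ : ∀ z, 0 ≤ φ z) :
    HasDecay e α φ ↔ ∃ c, ∀ z, φ z ≤
      c * ang (latticePt d A z) ^ e * Real.log (ang (latticePt d A z)) ^ α := by
  rw [HasDecay, ← (logWeight_ang_latticePt_isTheta hA e α).isBigO_congr_right, isBigO_top]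
  have hang := fun z => (logWeight_pos e α (two_le_ang (latticePt d A z))).le
  simp only [Real.norm_of_nonneg (hφ _), Real.norm_of_nonneg (hang _)]
  simp only [logWeight, mul_assoc]

end LatticePoints

/-! ### Transfer to the lattice -/

section Transfer

open Asymptotics

variable {d N : ℕ} {A : Matrix (Fin d) (Fin d) ℝ} {R : Finset (Vec d)}
  {s : {x // x ∈ R} → Fin d → ℤ}

/-- The `k`-th component of the lattice field `u` as a function on `ℤ ^ d`, which parametrises the
lattice by `latticePt`. -/
def pullback (A : Matrix (Fin d) (Fin d) ℝ) (u : Vec d → Vec N) (k : Fin N) : (Fin d → ℤ) → ℝ :=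
  fun z => u (latticePt d A z) k

lemma Dmulti_latticePt (hs : ∀ ρ, latticePt d A (s ρ) = ρ) {j : ℕ} (u : Vec d → Vec N)
    (k : Fin N) (ρs : Fin j → {x // x ∈ R}) (z : Fin d → ℤ) :
    Dmulti (fun i => (ρs i : Vec d)) u (latticePt d A z) k =
      fwdDiffs (Finset.univ.val.map fun i => s (ρs i)) (pullback A u k) z := by
  rw [← sum_powerset_smul_eq_fwdDiffs (𝕜 := ℝ), Finset.powerset_univ, Dmulti, Finset.sum_apply,
    Finset.card_univ, Fintype.card_fin]
  refine Finset.sum_congr rfl fun S _ => ?_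
  simp only [pullback, latticePt_add, ← latticePtHom_apply (∑ _ ∈ S, _), map_sum]
  simp only [latticePtHom_apply, hs, Pi.smul_apply]

lemma D1_latticePt (hs : ∀ ρ, latticePt d A (s ρ) = ρ) (u : Vec d → Vec N) (k : Fin N)
    (ρ : {x // x ∈ R}) (z : Fin d → ℤ) :
    D1 (ρ : Vec d) u (latticePt d A z) k = Δ_[s ρ] (pullback A u k) z := by
  simp only [D1, fwdDiff, pullback, latticePt_add, hs, Pi.sub_apply]

lemma Hop_latticePt (hs : ∀ ρ, latticePt d A (s ρ) = ρ) (C : Vec d → Vec d → Fin N → Fin N → ℝ)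
    (u : Vec d → Vec N) (i : Fin N) :
    pullback A (Hop d N R C u) i =
      divStress s (fun σ ρ => C σ ρ) (pullback A u) i := by
  funext z
  have hsub : ∀ σ, latticePt d A z - (σ : {x // x ∈ R}) = latticePt d A (z + -s σ) := fun σ => by
    rw [sub_eq_iff_eq_add, ← hs σ, ← latticePt_add, neg_add_cancel_right]
  simp only [pullback, Hop, divStress, stress, Finset.sum_apply, ← Finset.sum_coe_sort R,
    Pi.sub_apply, mulV, hsub, D1_latticePt hs, fwdDiff, Pi.smul_apply, smul_eq_mul,
    Finset.sum_sub_distrib]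

lemma closure_range_eq_top (hA : IsUnit A.det) (hs : ∀ ρ, latticePt d A (s ρ) = ρ)
    (hRspan : ∀ x ∈ Lattice d A, ∃ c : Vec d → ℤ, x = ∑ ρ ∈ R, (c ρ : ℝ) • ρ) :
    AddSubgroup.closure (Set.range s) = ⊤ := by
  refine eq_top_iff.2 fun z _ => ?_
  obtain ⟨c, hc⟩ := hRspan (latticePt d A z) ⟨z, rfl⟩
  have hz : z = ∑ ρ : {x // x ∈ R}, c ρ • s ρ := by
    apply latticePt_injective hA
    rw [hc, ← latticePtHom_apply, map_sum, ← Finset.sum_coe_sort R]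
    simp only [map_zsmul, latticePtHom_apply, hs, Int.cast_smul_eq_zsmul]
  rw [hz]
  exact AddSubgroup.sum_mem _ fun ρ _ => AddSubgroup.zsmul_mem _
    (AddSubgroup.subset_closure (Set.mem_range_self ρ)) _

lemma hasDecay_DnormJ_iff (hs : ∀ ρ, latticePt d A (s ρ) = ρ)
    (hclosure : AddSubgroup.closure (Set.range s) = ⊤) {e : ℝ} {α j : ℕ} {u : Vec d → Vec N} :
    HasDecay e α (fun z => DnormJ R j u (latticePt d A z)) ↔
      ∀ k t, t.card = j → HasDecay e α (fwdDiffs t (pullback A u k)) := by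
  refine isBigO_DnormJ_iff.trans ⟨fun h k t ht => ?_, fun h ρs k => ?_⟩
  · refine HasDecay.fwdDiffs_of_closure_eq_top hclosure (fun t ht hmem => ?_) ht
    obtain ⟨f, rfl⟩ := exists_map_univ_val_eq ht
    choose ρs hρs using fun i => hmem (f i) (Multiset.mem_map_of_mem f (Finset.mem_univ_val i))
    simpa only [Dmulti_latticePt hs, hρs] using h ρs k
  · simp only [Dmulti_latticePt hs]
    exact h k _ (by simp)

lemma tendsto_D1_of_inH1 {u : Vec d → Vec N} (hu : InH1 A R u) {ρ : Vec d} (hρ : ρ ∈ R) :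
    Tendsto (fun z => D1 ρ u (latticePt d A z)) cofinite (𝓝 0) := by
  have hsq : ∀ k z, D1 ρ u (latticePt d A z) k ^ 2 ≤ Dnorm1Sq R u (latticePt d A z) := fun k z =>
    (sq_le_sq.2 ((abs_le_enorm _ k).trans (le_abs_self _))).trans
      (Finset.single_le_sum (f := fun ρ => enorm (D1 ρ u (latticePt d A z)) ^ 2)
        (fun _ _ => sq_nonneg _) hρ)
  have hsqrt : Tendsto (fun z => √(Dnorm1Sq R u (latticePt d A z))) cofinite (𝓝 0) := by
    simpa only [Real.sqrt_zero] using hu.tendsto_cofinite_zero.sqrt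
  exact tendsto_pi_nhds.2 fun k =>
    squeeze_zero_norm (fun z => Real.abs_le_sqrt (hsq k z)) hsqrt

lemma tendsto_fwdDiff_pullback (hs : ∀ ρ, latticePt d A (s ρ) = ρ)
    (hclosure : AddSubgroup.closure (Set.range s) = ⊤) {u : Vec d → Vec N}
    (hu : ∀ ρ ∈ R, Tendsto (fun z => D1 ρ u (latticePt d A z)) cofinite (𝓝 0)) (k : Fin N)
    (b : Fin d → ℤ) : Tendsto (Δ_[b] (pullback A u k)) cofinite (𝓝 0) := by
  refine tendsto_fwdDiff_of_closure_eq_top hclosure ?_ b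
  rintro _ ⟨ρ, rfl⟩
  have h := tendsto_pi_nhds.1 (hu ρ ρ.2) k
  simp only [D1_latticePt hs] at h
  exact h

lemma annihilates_of_hasSum_latticePt (hA : IsUnit A.det) {p : ℕ} {f : (Fin d → ℤ) → ℝ}
    (h : ∀ i < p, ∀ js : Fin i → Fin d,
      HasSum (fun z => f z * ∏ m, latticePt d A z (js m)) 0) : Annihilates p f := by
  refine annihilates_of_latticeMonomial fun t ht => ?_
  obtain ⟨i, hi⟩ : ∃ i, t.card = i := ⟨_, rfl⟩
  obtain ⟨js, rfl⟩ := exists_map_univ_val_eq hi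
  have hexpand : ∀ z, f z * latticeMonomial (Finset.univ.val.map js) z =
      ∑ ks : Fin i → Fin d, (∏ m, A⁻¹ (js m) (ks m)) *
        (f z * ∏ m, latticePt d A z (ks m)) := fun z => by
    rw [latticeMonomial, Multiset.map_map, ← Finset.prod]
    simp only [Function.comp_apply, intCast_eq_sum_inv_mul_latticePt hA z]
    rw [Finset.prod_univ_sum, Fintype.piFinset_univ, Finset.mul_sum]
    refine Finset.sum_congr rfl fun ks _ => ?_
    rw [Finset.prod_mul_distrib, mul_left_comm]
  simpa only [hexpand, mul_zero, Finset.sum_const_zero] using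
    hasSum_sum fun ks (_ : ks ∈ Finset.univ) =>
      (h i (hi ▸ ht) ks).mul_left (∏ m, A⁻¹ (js m) (ks m))

lemma IsLatticeGreen.isGreenMatrix (hA : IsUnit A.det) (hs : ∀ ρ, latticePt d A (s ρ) = ρ)
    (hclosure : AddSubgroup.closure (Set.range s) = ⊤) {C : Vec d → Vec d → Fin N → Fin N → ℝ}
    {G : Vec d → Fin N → Fin N → ℝ} (hG : IsLatticeGreen d N A R C G) :
    IsGreenMatrix s (fun σ ρ => C σ ρ) fun k => pullback A (col G k) where
  divStress_eq k i z := by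
    have hz : latticePt d A z = 0 ↔ z = 0 :=
      map_eq_zero_iff (latticePtHom A) (latticePt_injective hA)
    rw [← Hop_latticePt hs, pullback, hG.1]
    simp only [hz]
    by_cases h : z = 0 <;> simp [h, Pi.single_apply]
  hasDecay k i t ht := by
    obtain ⟨c, hc⟩ := hG.2 t.card (Multiset.card_pos.2 ht)
    have hmat : HasDecay (2 - (d : ℝ) - t.card) 0 fun z => DnormJmat R t.card G (latticePt d A z) :=
      (hasDecay_iff_exists_le_ang (φ := fun z => DnormJmat R _ G _) hA
        fun _ => Real.sqrt_nonneg _).2 ⟨c, fun z => by simpa only [pow_zero, mul_one] using hc z⟩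
    exact (hasDecay_DnormJ_iff hs hclosure).1 (isBigO_sqrt_sum_sq_iff.1 hmat k) i t rfl

end Transfer

section VanishingMoments

variable {d N : ℕ} {A : Matrix (Fin d) (Fin d) ℝ} {R : Finset (Vec d)}
  {s : {x // x ∈ R} → Fin d → ℤ} {C : Vec d → Vec d → Fin N → Fin N → ℝ}
  {G : Vec d → Fin N → Fin N → ℝ} {u : Vec d → Vec N} {p α : ℕ}

lemma DnormJ_zero (u : Vec d → Vec N) (ℓ : Vec d) : DnormJ R 0 u ℓ = enorm (u ℓ) := by
  simp [DnormJ, Dmulti, enorm, Finset.sum_of_isEmpty]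

namespace IsLatticeGreen

lemma hasDecay_DnormJ_one (hG : IsLatticeGreen d N A R C G) (hd : 2 ≤ d) (hA : IsUnit A.det)
    (hs : ∀ ρ, latticePt d A (s ρ) = ρ) (hclosure : AddSubgroup.closure (Set.range s) = ⊤)
    (hC : ∀ σ ρ i j, C σ ρ i j = C ρ σ j i)
    (hu : ∀ ρ ∈ R, Tendsto (fun z => D1 ρ u (latticePt d A z)) cofinite (𝓝 0))
    (hf : HasDecay (-(d : ℝ) - p) α fun z => enorm (Hop d N R C u (latticePt d A z)))
    (hmom : ∀ i, Annihilates p (pullback A (Hop d N R C u) i)) :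
    HasDecay (1 - (d : ℝ) - p) (α + 1) fun z => DnormJ R 1 u (latticePt d A z) := by
  simp only [Hop_latticePt hs] at hmom
  refine (hasDecay_DnormJ_iff hs hclosure).2 fun k t ht => ?_
  obtain ⟨b, rfl⟩ := Multiset.card_eq_one.1 ht
  rw [fwdDiffs_singleton]
  refine (hG.isGreenMatrix hA hs hclosure).hasDecay_fwdDiff hd (fun _ _ _ _ => hC _ _ _ _)
    (tendsto_fwdDiff_pullback hs hclosure hu) (fun i => ?_) hmom k b
  rw [← Hop_latticePt hs]
  exact isBigO_enorm_iff.1 hf i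

lemma hasDecay_DnormJ_add_two (hG : IsLatticeGreen d N A R C G) (hd : 2 ≤ d) (hA : IsUnit A.det)
    (hs : ∀ ρ, latticePt d A (s ρ) = ρ) (hclosure : AddSubgroup.closure (Set.range s) = ⊤)
    (hC : ∀ σ ρ i j, C σ ρ i j = C ρ σ j i)
    (hu : ∀ ρ ∈ R, Tendsto (fun z => D1 ρ u (latticePt d A z)) cofinite (𝓝 0)) {n : ℕ}
    (hf : ∀ m ≤ n, HasDecay (-(d : ℝ) - p - m) α
      fun z => DnormJ R m (Hop d N R C u) (latticePt d A z))
    (hmom : ∀ i, Annihilates p (pullback A (Hop d N R C u) i)) :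
    HasDecay (-(d : ℝ) - p - n) (α + 1) fun z => DnormJ R (n + 2) u (latticePt d A z) := by
  simp only [Hop_latticePt hs] at hmom
  refine (hasDecay_DnormJ_iff hs hclosure).2 fun k t ht => ?_
  rw [sub_sub, ← Nat.cast_add]
  refine (hG.isGreenMatrix hA hs hclosure).hasDecay_fwdDiffs hd (fun _ _ _ _ => hC _ _ _ _)
    (tendsto_fwdDiff_pullback hs hclosure hu) (fun i t ht => ?_) hmom k ht
  rw [← Hop_latticePt hs, Nat.cast_add, ← sub_sub]
  exact (hasDecay_DnormJ_iff hs hclosure).1 (hf _ ht) i t rfl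

lemma hasDecay_DnormJ (hG : IsLatticeGreen d N A R C G) (hd : 2 ≤ d) (hA : IsUnit A.det)
    (hs : ∀ ρ, latticePt d A (s ρ) = ρ) (hclosure : AddSubgroup.closure (Set.range s) = ⊤)
    (hC : ∀ σ ρ i j, C σ ρ i j = C ρ σ j i)
    (hu : ∀ ρ ∈ R, Tendsto (fun z => D1 ρ u (latticePt d A z)) cofinite (𝓝 0)) {j : ℕ}
    (hj : 1 ≤ j) (hf : HasDecay (-(d : ℝ) - p) α fun z => enorm (Hop d N R C u (latticePt d A z)))
    (hDf : ∀ m, 1 ≤ m → m + 2 ≤ j → HasDecay (-(d : ℝ) - p - m) α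
      fun z => DnormJ R m (Hop d N R C u) (latticePt d A z))
    (hmom : ∀ i, Annihilates p (pullback A (Hop d N R C u) i)) :
    HasDecay (2 - (d : ℝ) - p - j) (α + 1) fun z => DnormJ R j u (latticePt d A z) := by
  obtain rfl | hj := hj.eq_or_lt
  · convert hG.hasDecay_DnormJ_one hd hA hs hclosure hC hu hf hmom using 1
    push_cast
    ring
  · obtain ⟨n, rfl⟩ := Nat.exists_eq_add_of_le' hj
    convert hG.hasDecay_DnormJ_add_two hd hA hs hclosure hC hu (n := n) (fun m hm => ?_) hmom
      using 1
    · push_cast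
      ring
    · obtain rfl | hpos := m.eq_zero_or_pos
      · simpa only [DnormJ_zero, Nat.cast_zero, sub_zero] using hf
      · exact hDf m hpos (by omega)

end IsLatticeGreen

end VanishingMoments

theorem decay_with_vanishing_moments_general
    (d N : ℕ) (hd : 2 ≤ d)
    (A : Matrix (Fin d) (Fin d) ℝ) (hA : IsUnit A.det)
    (R : Finset (Vec d)) (hRlat : ∀ ρ ∈ R, ρ ∈ Lattice d A)
    (hRspan : ∀ x ∈ Lattice d A, ∃ c : Vec d → ℤ, x = ∑ ρ ∈ R, (c ρ : ℝ) • ρ)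
    (C : Vec d → Vec d → Fin N → Fin N → ℝ)
    (hCsym : ∀ σ ρ i j, C σ ρ i j = C ρ σ j i)
    (G : Vec d → Fin N → Fin N → ℝ) (hG : IsLatticeGreen d N A R C G)
    (u : Vec d → Vec N)
    (hu : ∀ ρ ∈ R, Tendsto (fun z : Fin d → ℤ => D1 ρ u (latticePt d A z)) cofinite (𝓝 0))
    (p α : ℕ) (c : ℝ)
    (hbound : ∀ z : Fin d → ℤ,
      enorm (Hop d N R C u (latticePt d A z)) ≤
        c * ang (latticePt d A z) ^ (-(d : ℝ) - p) *
          Real.log (ang (latticePt d A z)) ^ α)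
    (hmom : ∀ i : ℕ, i < p → ∀ (a : Fin N) (js : Fin i → Fin d),
      HasSum (fun z : Fin d → ℤ =>
        Hop d N R C u (latticePt d A z) a * ∏ m, latticePt d A z (js m)) 0) :
    (∀ j : ℕ, j = 1 ∨ j = 2 → ∃ Cj : ℝ, ∀ z : Fin d → ℤ,
        DnormJ R j u (latticePt d A z) ≤
          Cj * ang (latticePt d A z) ^ ((2 : ℝ) - d - p - j) *
            Real.log (ang (latticePt d A z)) ^ (α + 1)) ∧
    (∀ j : ℕ, 3 ≤ j →
      (∀ m : ℕ, 1 ≤ m → m ≤ j - 2 → ∀ z : Fin d → ℤ,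
          DnormJ R m (Hop d N R C u) (latticePt d A z) ≤
            c * ang (latticePt d A z) ^ (-(d : ℝ) - p - m) *
              Real.log (ang (latticePt d A z)) ^ α) →
      ∃ Cj : ℝ, ∀ z : Fin d → ℤ,
        DnormJ R j u (latticePt d A z) ≤
          Cj * ang (latticePt d A z) ^ ((2 : ℝ) - d - p - j) *
            Real.log (ang (latticePt d A z)) ^ (α + 1)) := by
  choose s hs using fun ρ : {x // x ∈ R} => hRlat ρ ρ.2
  have hclosure := closure_range_eq_top hA hs hRspan
  have hannihilates (i) : Annihilates p (pullback A (Hop d N R C u) i) :=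
    annihilates_of_hasSum_latticePt hA fun n hn js => hmom n hn i js
  have hdecay_iff (j : ℕ) (v : Vec d → Vec N) {e : ℝ} {β : ℕ} :=
    hasDecay_iff_exists_le_ang hA (e := e) (α := β) (φ := fun z => DnormJ R j v (latticePt d A z))
      fun _ => Real.sqrt_nonneg _
  have hf : HasDecay (-(d : ℝ) - p) α fun z => enorm (Hop d N R C u (latticePt d A z)) :=
    (hasDecay_iff_exists_le_ang hA fun _ => Real.sqrt_nonneg _).2 ⟨c, hbound⟩
  refine ⟨fun j hj => (hdecay_iff j u).1 ?_, fun j hj hDf => (hdecay_iff j u).1 ?_⟩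
  · exact hG.hasDecay_DnormJ hd hA hs hclosure hCsym hu (by omega) hf
      (fun m hm hmj => by omega) hannihilates
  · exact hG.hasDecay_DnormJ hd hA hs hclosure hCsym hu (by omega) hf
      (fun m hm hmj => (hdecay_iff m _).2 ⟨c, hDf m hm (by omega)⟩) hannihilates

/-- Theorem: decay of lattice fields with vanishing moments. -/
theorem decay_with_vanishing_moments
    (d N : ℕ) (hd : 2 ≤ d)
    (A : Matrix (Fin d) (Fin d) ℝ) (hA : IsUnit A.det)
    (R : Finset (Vec d)) (hR0 : (0 : Vec d) ∉ R)
    (hRlat : ∀ ρ ∈ R, ρ ∈ Lattice d A)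
    (hRsym : ∀ ρ ∈ R, -ρ ∈ R)
    (hRspan : ∀ x ∈ Lattice d A, ∃ c : Vec d → ℤ, x = ∑ ρ ∈ R, (c ρ : ℝ) • ρ)
    (C : Vec d → Vec d → Fin N → Fin N → ℝ)
    (hCsym : ∀ σ ρ i j, C σ ρ i j = C ρ σ j i)
    (hCpt : ∀ σ ρ, C σ ρ = C (-σ) (-ρ))
    (hstab : IsStable d N A R C)
    (G : Vec d → Fin N → Fin N → ℝ) (hG : IsLatticeGreen d N A R C G)
    (u : Vec d → Vec N) (hu : InH1 A R u)
    (p α : ℕ) (c : ℝ) (hc : 0 < c)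
    (hbound : ∀ z : Fin d → ℤ,
      enorm (Hop d N R C u (latticePt d A z)) ≤
        c * ang (latticePt d A z) ^ (-(d : ℝ) - p) *
          Real.log (ang (latticePt d A z)) ^ α)
    (hmom : ∀ i : ℕ, i < p → ∀ (a : Fin N) (js : Fin i → Fin d),
      HasSum (fun z : Fin d → ℤ =>
        Hop d N R C u (latticePt d A z) a * ∏ m, latticePt d A z (js m)) 0) :
    (∀ j : ℕ, j = 1 ∨ j = 2 → ∃ Cj : ℝ, ∀ z : Fin d → ℤ,
        DnormJ R j u (latticePt d A z) ≤
          Cj * ang (latticePt d A z) ^ ((2 : ℝ) - d - p - j) *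
            Real.log (ang (latticePt d A z)) ^ (α + 1)) ∧
    (∀ j : ℕ, 3 ≤ j →
      (∀ m : ℕ, 1 ≤ m → m ≤ j - 2 → ∀ z : Fin d → ℤ,
          DnormJ R m (Hop d N R C u) (latticePt d A z) ≤
            c * ang (latticePt d A z) ^ (-(d : ℝ) - p - m) *
              Real.log (ang (latticePt d A z)) ^ α) →
      ∃ Cj : ℝ, ∀ z : Fin d → ℤ,
        DnormJ R j u (latticePt d A z) ≤
          Cj * ang (latticePt d A z) ^ ((2 : ℝ) - d - p - j) *
            Real.log (ang (latticePt d A z)) ^ (α + 1)) :=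
  decay_with_vanishing_moments_general d N hd A hA R hRlat hRspan C hCsym G hG u
    (fun _ hρ => tendsto_D1_of_inH1 hu hρ) p α c hbound hmom

end Defect
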